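/- arXiv:1207.4990 — 5 statements merged into one kernel-verified Lean document; each statement's English description precedes it below -/
import Mathlib

section
/- Szegő's First Limit Theorem: Let φ be a continuous function on the unit circle with φ(e^{iθ}) > 0 for all θ. Then the Toeplitz determinants D_n(φ) are positive for all n ≥ 1, and (1/n)·log D_n(φ) converges, as n → ∞, to (1/2π)∫_{-π}^{π} log φ(e^{iθ}) dθ. -/
/-!
The Toeplitz quadratic form of a vector `v` is the mean of `|p|² φ` over the circle, where
`p(z) = ∑ v_k z^k` (`toeplitz_quad`). Hence the Toeplitz matrices are positive definite, and the
ratio `D_{n+1} / D_n` is the minimum of this mean over polynomials `p` of degree at most `n` with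
`p(0) = 1`; the minimizer is the normalized first column of the adjugate (`ratio_isLeast`).

Let `L` be the mean of `log φ`. By density of trigonometric polynomials there is a polynomial `H`
with `|log φ - Re H| ≤ ε` on the circle (`exists_poly_approx`), and the mean value property gives
`|L - Re H(0)| ≤ ε`. Every competitor `p` has energy at least `e^{Re H(0) - ε}`: up to a factor
`e^{-ε}`, `|p|² φ` dominates `|p e^{H/2}|²`, whose mean is at least the squared modulus of
`p e^{H/2}` at `0` (`energy_lower`). Conversely, `p = (1 + w/N)^N` with `w = (H(0) - H)/2` is a
polynomial replacement for `e^w` with `p(0) = 1` and energy at most `e^{Re H(0) + 2ε}` for `N`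
large (`energy_upper`). So `log (D_{n+1} / D_n) → L`, and the theorem follows by Cesàro averaging,
since `D_0 = 1`.
-/

open MeasureTheory Filter Topology

/-- The `ℓ`-th Fourier coefficient of a function `θ ↦ φ(e^{iθ})` on the unit circle:
`φ_ℓ = (1/2π) ∫_{-π}^{π} e^{-iℓθ} φ(e^{iθ}) dθ`. -/
noncomputable def fourierCoeff' (φ : ℝ → ℂ) (ℓ : ℤ) : ℂ :=
  ((2 * Real.pi : ℝ) : ℂ)⁻¹ *
    ∫ θ in (-Real.pi)..Real.pi, Complex.exp (-Complex.I * (ℓ : ℂ) * (θ : ℂ)) * φ θ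

/-- The `n × n` Toeplitz matrix `T_n(φ) = (φ_{j-k})_{0 ≤ j,k ≤ n-1}`. -/
noncomputable def toeplitzMatrix (φ : ℝ → ℂ) (n : ℕ) : Matrix (Fin n) (Fin n) ℂ :=
  Matrix.of fun j k : Fin n => fourierCoeff' φ ((j : ℤ) - (k : ℤ))

/-- The Toeplitz determinant `D_n(φ) = det T_n(φ)`. -/
noncomputable def toeplitzDet (φ : ℝ → ℂ) (n : ℕ) : ℂ :=
  (toeplitzMatrix φ n).det

open Polynomial Matrix

/-! ### The Toeplitz form and its extremal problem -/

/-- The point `e^{iθ}` of the unit circle. -/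
noncomputable def circlePt (θ : ℝ) : ℂ := Complex.exp (θ * Complex.I)

/-- The weighted mean square `(1/2π) ∫_{-π}^{π} |p(e^{iθ})|² φ(θ) dθ` of a polynomial `p`. -/
noncomputable def energy (φ : ℝ → ℝ) (p : ℂ[X]) : ℝ :=
  (2 * Real.pi)⁻¹ * ∫ θ in (-Real.pi)..Real.pi, ‖p.eval (circlePt θ)‖ ^ 2 * φ θ

/-- The polynomial `∑ v_k z^k` with coefficient vector `v`. -/
noncomputable def vecPoly {n : ℕ} (v : Fin n → ℂ) : ℂ[X] := ∑ k : Fin n, C (v k) * X ^ (k : ℕ)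

lemma continuous_circlePt : Continuous circlePt := by
  unfold circlePt; fun_prop

lemma norm_circlePt (θ : ℝ) : ‖circlePt θ‖ = 1 := by
  unfold circlePt; exact Complex.norm_exp_ofReal_mul_I θ

lemma continuous_energy_integrand {φ : ℝ → ℝ} (hφ : Continuous φ) (p : ℂ[X]) :
    Continuous fun θ => ‖p.eval (circlePt θ)‖ ^ 2 * φ θ := by
  have := continuous_circlePt
  fun_prop

lemma eval_vecPoly {n : ℕ} (v : Fin n → ℂ) (z : ℂ) :
    (vecPoly v).eval z = ∑ k : Fin n, v k * z ^ (k : ℕ) := by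
  simp [vecPoly, eval_finsetSum]

lemma coeff_vecPoly {n : ℕ} (v : Fin n → ℂ) (k : Fin n) : (vecPoly v).coeff k = v k := by
  simp [vecPoly, coeff_X_pow, Fin.val_inj]

lemma eval_zero_vecPoly {n : ℕ} (v : Fin (n + 1) → ℂ) : (vecPoly v).eval 0 = v 0 := by
  rw [← coeff_zero_eq_eval_zero]; exact coeff_vecPoly v 0

lemma vecPoly_coeff {n : ℕ} (p : ℂ[X]) (hp : p.natDegree < n) :
    vecPoly (fun k : Fin n => p.coeff k) = p := by
  conv_rhs => rw [p.as_sum_range_C_mul_X_pow' hp, Finset.sum_range]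
  rfl

lemma circlePt_conj_pow_mul (θ : ℝ) (j k : ℕ) :
    star (circlePt θ ^ j) * circlePt θ ^ k =
      Complex.exp (-Complex.I * (((j : ℤ) - (k : ℤ) : ℤ) : ℂ) * θ) := by
  unfold circlePt
  rw [Complex.star_def, map_pow, ← Complex.exp_conj, ← Complex.exp_nat_mul, ← Complex.exp_nat_mul,
    ← Complex.exp_add]
  congr 1
  simp
  ring

/-- The Toeplitz quadratic form is the weighted mean square of the associated polynomial. -/
lemma toeplitz_quad {φ : ℝ → ℝ} (hφ : Continuous φ) {n : ℕ} (v : Fin n → ℂ) :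
    star v ⬝ᵥ (toeplitzMatrix (fun θ => (φ θ : ℂ)) n *ᵥ v) = (energy φ (vecPoly v) : ℂ) := by
  have key : ∀ θ : ℝ, ((‖(vecPoly v).eval (circlePt θ)‖ ^ 2 * φ θ : ℝ) : ℂ) =
      ∑ j : Fin n, ∑ k : Fin n, (star (v j) * v k) *
        (Complex.exp (-Complex.I * (((j : ℤ) - (k : ℤ) : ℤ) : ℂ) * θ) * φ θ) := by
    intro θ
    rw [Complex.ofReal_mul, Complex.ofReal_pow, ← Complex.conj_mul', ← Complex.star_def,
      eval_vecPoly, star_sum, Finset.sum_mul_sum, Finset.sum_mul]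
    refine Finset.sum_congr rfl fun j _ => ?_
    rw [Finset.sum_mul]
    refine Finset.sum_congr rfl fun k _ => ?_
    rw [← circlePt_conj_pow_mul, star_mul']
    ring
  unfold energy
  rw [Complex.ofReal_mul, ← intervalIntegral.integral_ofReal]
  simp_rw [key]
  rw [intervalIntegral.integral_finsetSum]
  · simp only [dotProduct, mulVec, Pi.star_apply, Finset.mul_sum]
    refine Finset.sum_congr rfl fun j _ => ?_
    rw [intervalIntegral.integral_finsetSum]
    · rw [Finset.mul_sum]
      refine Finset.sum_congr rfl fun k _ => ?_
      rw [intervalIntegral.integral_const_mul]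
      simp only [toeplitzMatrix, of_apply, fourierCoeff']
      push_cast
      ring
    · intro k _
      apply Continuous.intervalIntegrable
      fun_prop
  · intro j _
    apply Continuous.intervalIntegrable
    fun_prop

lemma toeplitz_isHermitian (φ : ℝ → ℝ) (n : ℕ) :
    (toeplitzMatrix (fun θ => (φ θ : ℂ)) n).IsHermitian := by
  ext j k
  simp only [conjTranspose_apply, toeplitzMatrix, of_apply, fourierCoeff', Complex.star_def]
  have hle : -Real.pi ≤ Real.pi := by linarith [Real.pi_pos]
  rw [map_mul, intervalIntegral.integral_of_le hle, intervalIntegral.integral_of_le hle,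
    ← integral_conj]
  congr 1
  · rw [map_inv₀, Complex.conj_ofReal]
  · refine integral_congr_ae (.of_forall fun θ => ?_)
    simp only [map_mul, ← Complex.exp_conj, Complex.conj_ofReal]
    congr 2
    simp
    ring

lemma infinite_range_circlePt : (circlePt '' Set.Ioc (-Real.pi) Real.pi).Infinite := by
  refine (Set.Ioc_infinite (by linarith [Real.pi_pos])).image fun x hx y hy h => ?_
  have h' := congrArg Complex.arg h
  simp only [circlePt, Complex.exp_mul_I] at h'
  rwa [Complex.arg_cos_add_sin_mul_I hx, Complex.arg_cos_add_sin_mul_I hy] at h'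

lemma energy_pos {φ : ℝ → ℝ} (hφ : Continuous φ) (hpos : ∀ θ, 0 < φ θ) {p : ℂ[X]} (hp : p ≠ 0) :
    0 < energy φ p := by
  obtain ⟨θ, hθ, h0⟩ : ∃ θ ∈ Set.Ioc (-Real.pi) Real.pi, p.eval (circlePt θ) ≠ 0 := by
    by_contra! h
    refine hp (eq_zero_of_infinite_isRoot p (infinite_range_circlePt.mono ?_))
    rintro _ ⟨θ, hθ, rfl⟩
    exact h θ hθ
  have hpi := Real.pi_pos
  refine mul_pos (by positivity) (intervalIntegral.integral_pos (by linarith)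
    (continuous_energy_integrand hφ p).continuousOn (fun x _ => ?_)
    ⟨θ, Set.Ioc_subset_Icc_self hθ, ?_⟩)
  · have := hpos x; positivity
  · have := hpos θ; positivity

open scoped ComplexOrder in
lemma toeplitz_posDef {φ : ℝ → ℝ} (hφ : Continuous φ) (hpos : ∀ θ, 0 < φ θ) (n : ℕ) :
    (toeplitzMatrix (fun θ => (φ θ : ℂ)) n).PosDef := by
  refine .of_dotProduct_mulVec_pos (toeplitz_isHermitian φ n) fun v hv => ?_
  rw [toeplitz_quad hφ]
  refine Complex.zero_lt_real.mpr (energy_pos hφ hpos fun h => hv ?_)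
  ext k
  rw [← coeff_vecPoly v k, h]; simp

open scoped ComplexOrder in
lemma toeplitzDet_pos {φ : ℝ → ℝ} (hφ : Continuous φ) (hpos : ∀ θ, 0 < φ θ) (n : ℕ) :
    0 < (toeplitzDet (fun θ => (φ θ : ℂ)) n).re ∧ (toeplitzDet (fun θ => (φ θ : ℂ)) n).im = 0 := by
  have h := (toeplitz_posDef hφ hpos n).det_pos
  rw [Complex.lt_def] at h
  exact ⟨h.1, h.2.symm⟩

lemma toeplitz_submatrix (φ : ℝ → ℂ) (n : ℕ) :
    (toeplitzMatrix φ (n + 1)).submatrix Fin.succ Fin.succ = toeplitzMatrix φ n := by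
  ext j k
  simp [toeplitzMatrix]

/-- The ratio `D_{n+1} / D_n` is the minimum of the weighted mean square over the polynomials `p`
of degree at most `n` with `p(0) = 1`. -/
lemma ratio_isLeast {φ : ℝ → ℝ} (hφ : Continuous φ) (hpos : ∀ θ, 0 < φ θ) (n : ℕ) :
    IsLeast (energy φ '' {p : ℂ[X] | p.natDegree < n + 1 ∧ p.eval 0 = 1})
      ((toeplitzDet (fun θ => (φ θ : ℂ)) (n + 1)).re /
        (toeplitzDet (fun θ => (φ θ : ℂ)) n).re) := by
  set T := toeplitzMatrix (fun θ => (φ θ : ℂ)) (n + 1) with hT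
  set d := (toeplitzDet (fun θ => (φ θ : ℂ)) n).re with hd
  set d' := (toeplitzDet (fun θ => (φ θ : ℂ)) (n + 1)).re with hd'
  obtain ⟨hd0, hdim⟩ := toeplitzDet_pos hφ hpos n
  obtain ⟨hd0', hdim'⟩ := toeplitzDet_pos hφ hpos (n + 1)
  have hdC : toeplitzDet (fun θ => (φ θ : ℂ)) n = (d : ℂ) := Complex.ext rfl (by simpa using hdim)
  have hdC' : T.det = (d' : ℂ) := Complex.ext rfl hdim'
  have hdne : (d : ℂ) ≠ 0 := by exact_mod_cast ne_of_gt hd0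
  -- The minimizer is the normalized first column of the inverse matrix.
  set w : Fin (n + 1) → ℂ := fun k => (d : ℂ)⁻¹ * T.adjugate k 0 with hw
  have hw0 : w 0 = 1 := by
    have : T.adjugate 0 0 = d := by
      rw [adjugate_fin_succ_eq_det_submatrix]
      simp only [Fin.val_zero, add_zero, pow_zero, one_mul, Fin.succAbove_zero]
      rw [hT, toeplitz_submatrix]; exact hdC
    simp [hw, this, hdne]
  have hTw : T *ᵥ w = Pi.single 0 ((d' / d : ℝ) : ℂ) := by
    have h1 : T *ᵥ w = (d : ℂ)⁻¹ • ((T * T.adjugate).col 0) := by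
      ext j
      simp only [mulVec, dotProduct, hw, Pi.smul_apply, col_apply, mul_apply, smul_eq_mul,
        Finset.mul_sum]
      exact Finset.sum_congr rfl fun k _ => by ring
    rw [h1, mul_adjugate, hdC']
    ext j
    by_cases hj : j = 0
    · subst hj; simp; field_simp
    · simp [hj]
  have hquad : ∀ v : Fin (n + 1) → ℂ, v 0 = 1 → star v ⬝ᵥ (T *ᵥ w) = ((d' / d : ℝ) : ℂ) := by
    intro v hv
    rw [hTw, dotProduct_single]
    simp [hv]
  constructor
  · refine ⟨vecPoly w, ⟨?_, by rw [eval_zero_vecPoly, hw0]⟩, ?_⟩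
    · have : (vecPoly w).natDegree ≤ n := by
        refine natDegree_sum_le_of_forall_le _ _ fun k _ => ?_
        exact (natDegree_C_mul_X_pow_le _ _).trans (by omega)
      omega
    · have := toeplitz_quad hφ w
      rw [← hT, hquad w hw0] at this
      exact_mod_cast this.symm
  · rintro _ ⟨p, ⟨hpn, hp0⟩, rfl⟩
    set v : Fin (n + 1) → ℂ := fun k => p.coeff k with hv
    have hvp : vecPoly v = p := vecPoly_coeff p hpn
    have hv0 : v 0 = 1 := by rw [← eval_zero_vecPoly v, hvp, hp0]
    have hherm : star w ⬝ᵥ (T *ᵥ v) = ((d' / d : ℝ) : ℂ) := by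
      have hH : Tᴴ = T := toeplitz_isHermitian φ (n + 1)
      have h2 : star (star v ⬝ᵥ (T *ᵥ w)) = star w ⬝ᵥ (T *ᵥ v) := by
        rw [star_dotProduct, star_mulVec, hH, star_star, ← dotProduct_mulVec]
      rw [← h2, hquad v hv0]
      simp
    have h3 : star (v - w) ⬝ᵥ (T *ᵥ (v - w)) = ((energy φ p - d' / d : ℝ) : ℂ) := by
      rw [star_sub, mulVec_sub, sub_dotProduct, dotProduct_sub, dotProduct_sub, hherm,
        hquad v hv0, hquad w hw0, hT, toeplitz_quad hφ, hvp]
      push_cast; ring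
    rw [toeplitz_quad hφ] at h3
    have h4 : 0 ≤ energy φ (vecPoly (v - w)) := by
      by_cases h : vecPoly (v - w) = 0
      · simp [energy, h]
      · exact (energy_pos hφ hpos h).le
    have h5 : energy φ (vecPoly (v - w)) = energy φ p - d' / d := by exact_mod_cast h3
    linarith

/-! ### The value of the extremal problem in the limit -/

/-- Mean value property: the average of an entire function over the unit circle is its value at
the origin. -/
lemma mean_circlePt {F : ℂ → ℂ} (hF : Differentiable ℂ F) :
    ((2 * Real.pi : ℝ) : ℂ)⁻¹ * ∫ θ in (-Real.pi)..Real.pi, F (circlePt θ) = F 0 := by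
  have h := (hF.diffContOnCl (s := Metric.ball (0 : ℂ) |1|)).circleAverage
  rw [Real.circleAverage_def] at h
  have hcm : ∀ θ : ℝ, circleMap 0 1 θ = circlePt θ := fun θ => by simp [circleMap, circlePt]
  simp only [hcm] at h
  have hper : Function.Periodic (fun θ => F (circlePt θ)) (2 * Real.pi) := fun θ => by
    simp only [← hcm, periodic_circleMap 0 1 θ]
  have h2 := hper.intervalIntegral_add_eq 0 (-Real.pi)
  rw [zero_add, show -Real.pi + 2 * Real.pi = Real.pi by ring] at h2
  rw [← h2, ← h, Complex.real_smul, Complex.ofReal_inv]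

lemma mean_re_circlePt {F : ℂ → ℂ} (hF : Differentiable ℂ F) :
    (2 * Real.pi)⁻¹ * ∫ θ in (-Real.pi)..Real.pi, (F (circlePt θ)).re = (F 0).re := by
  have hc : Continuous fun θ => F (circlePt θ) := hF.continuous.comp continuous_circlePt
  have hi : IntervalIntegrable (fun θ => F (circlePt θ)) volume (-Real.pi) Real.pi :=
    hc.intervalIntegrable _ _
  rw [← mean_circlePt hF, ← Complex.ofReal_inv, Complex.re_ofReal_mul]
  congr 1
  exact Complex.reCLM.intervalIntegral_comp_comm hi

lemma mean_mono {f g : ℝ → ℝ} (hf : Continuous f) (hg : Continuous g) (h : ∀ θ, f θ ≤ g θ) :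
    (2 * Real.pi)⁻¹ * ∫ θ in (-Real.pi)..Real.pi, f θ ≤
      (2 * Real.pi)⁻¹ * ∫ θ in (-Real.pi)..Real.pi, g θ := by
  have hpi := Real.pi_pos
  exact mul_le_mul_of_nonneg_left (intervalIntegral.integral_mono (by linarith)
    (hf.intervalIntegrable _ _) (hg.intervalIntegrable _ _) h) (by positivity)

lemma mean_const (c : ℝ) : (2 * Real.pi)⁻¹ * ∫ _θ in (-Real.pi)..Real.pi, c = c := by
  have hpi := Real.pi_pos
  rw [intervalIntegral.integral_const, smul_eq_mul]
  field_simp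
  ring

/-- A real continuous periodic function is a uniform limit of real parts of polynomials on the
unit circle: real trigonometric polynomials are dense, and each of them is such a real part. -/
lemma exists_poly_approx {g : ℝ → ℝ} (hg : Continuous g)
    (hper : Function.Periodic g (2 * Real.pi)) {ε : ℝ} (hε : 0 < ε) :
    ∃ H : ℂ[X], ∀ θ, |g θ - (H.eval (circlePt θ)).re| ≤ ε := by
  have : Fact (0 < 2 * Real.pi) := ⟨Real.two_pi_pos⟩
  -- The property `f = p + conj q` on the circle is stable under complex scalars.
  have hspan : ∀ f ∈ Submodule.span ℂ (Set.range (@fourier (2 * Real.pi))),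
      ∃ p q : ℂ[X], ∀ θ : ℝ, f (θ : AddCircle (2 * Real.pi)) =
        p.eval (circlePt θ) + star (q.eval (circlePt θ)) := by
    intro f hf
    induction hf using Submodule.span_induction with
    | mem f hf =>
      obtain ⟨n, rfl⟩ := hf
      have h1 : ∀ (m : ℕ) (θ : ℝ),
          fourier (m : ℤ) (θ : AddCircle (2 * Real.pi)) = circlePt θ ^ m := by
        intro m θ
        rw [fourier_coe_apply, circlePt, ← Complex.exp_nat_mul]
        congr 1
        have : (Real.pi : ℂ) ≠ 0 := by exact_mod_cast Real.pi_ne_zero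
        push_cast
        field_simp
      rcases Int.eq_nat_or_neg n with ⟨m, rfl | rfl⟩
      · exact ⟨X ^ m, 0, fun θ => by simp [h1]⟩
      · exact ⟨0, X ^ m, fun θ => by rw [fourier_neg, h1]; simp⟩
    | zero => exact ⟨0, 0, fun θ => by simp⟩
    | add f₁ f₂ _ _ h₁ h₂ =>
      obtain ⟨p₁, q₁, h₁⟩ := h₁
      obtain ⟨p₂, q₂, h₂⟩ := h₂
      refine ⟨p₁ + p₂, q₁ + q₂, fun θ => ?_⟩
      rw [ContinuousMap.add_apply, h₁, h₂, eval_add, eval_add, star_add]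
      ring
    | smul a f _ h =>
      obtain ⟨p, q, h⟩ := h
      refine ⟨C a * p, C (star a) * q, fun θ => ?_⟩
      rw [ContinuousMap.smul_apply, h, eval_C_mul, eval_C_mul, star_mul', star_star, smul_eq_mul]
      ring
  have hcont : Continuous (fun x : AddCircle (2 * Real.pi) => (hper.lift x : ℂ)) := by
    refine Complex.continuous_ofReal.comp ?_
    exact continuous_coinduced_dom.mpr hg
  let G : C(AddCircle (2 * Real.pi), ℂ) := ⟨_, hcont⟩
  have hG : G ∈ closure (Submodule.span ℂ (Set.range (@fourier (2 * Real.pi))) : Set _) := by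
    rw [← Submodule.topologicalClosure_coe, span_fourier_closure_eq_top]
    trivial
  obtain ⟨f, hf, hfG⟩ := Metric.mem_closure_iff.mp hG ε hε
  obtain ⟨p, q, hpq⟩ := hspan f hf
  refine ⟨p + q, fun θ => ?_⟩
  have h1 : ‖G θ - f θ‖ ≤ ε := by
    rw [← dist_eq_norm]; exact (ContinuousMap.dist_apply_le_dist _).trans hfG.le
  have h2 : G θ = (g θ : ℂ) := rfl
  rw [h2, hpq] at h1
  refine le_trans (le_of_eq ?_) ((Complex.abs_re_le_norm _).trans h1)
  simp

/-- Every polynomial with `p(0) = 1` has weighted mean square at least `e^{Re H(0) - ε}` when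
`log φ ≥ Re H - ε` on the circle: apply the mean value property to `p e^{(H - H(0))/2}`. -/
lemma energy_lower {φ : ℝ → ℝ} (hφ : Continuous φ) {H : ℂ[X]} {ε : ℝ}
    (hH : ∀ θ, Real.exp ((H.eval (circlePt θ)).re - ε) ≤ φ θ) {p : ℂ[X]} (hp : p.eval 0 = 1) :
    Real.exp ((H.eval 0).re - ε) ≤ energy φ p := by
  set F : ℂ → ℂ := fun z =>
    Real.exp ((H.eval 0).re - ε) *
      (2 * (p.eval z * Complex.exp ((H.eval z - H.eval 0) / 2)) - 1) with hFdef
  have hF : Differentiable ℂ F := by fun_prop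
  have h0 : (F 0).re = Real.exp ((H.eval 0).re - ε) := by
    have : F 0 = Real.exp ((H.eval 0).re - ε) := by simp only [hFdef]; rw [hp]; norm_num
    rw [this, Complex.ofReal_re]
  rw [← h0, ← mean_re_circlePt hF]
  refine mean_mono (Complex.continuous_re.comp (hF.continuous.comp continuous_circlePt))
    (continuous_energy_integrand hφ p) fun θ => ?_
  set z := circlePt θ
  set E := Complex.exp ((H.eval z - H.eval 0) / 2) with hE
  have hnE : ‖E‖ ^ 2 = Real.exp ((H.eval z).re - (H.eval 0).re) := by
    rw [hE, Complex.norm_exp, ← Real.exp_nat_mul]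
    congr 1
    simp
    ring
  have hsq : 2 * (p.eval z * E).re - 1 ≤ ‖p.eval z * E‖ ^ 2 := by
    have := Complex.re_le_norm (p.eval z * E)
    nlinarith [sq_nonneg (‖p.eval z * E‖ - 1)]
  calc (F z).re = Real.exp ((H.eval 0).re - ε) * (2 * (p.eval z * E).re - 1) := by
        simp only [hFdef, Complex.re_ofReal_mul]
        simp [← hE]
    _ ≤ Real.exp ((H.eval 0).re - ε) * ‖p.eval z * E‖ ^ 2 := by gcongr
    _ = ‖p.eval z‖ ^ 2 * Real.exp ((H.eval z).re - ε) := by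
        rw [norm_mul, mul_pow, hnE, mul_left_comm, ← Real.exp_add]
        congr 2
        ring
    _ ≤ ‖p.eval z‖ ^ 2 * φ θ := by gcongr; exact hH θ

/-- Taking `p = (1 + w/N)^N` with `w = (H(0) - H)/2` nearly attains the lower bound, because
`|1 + w/N|^{2N} ≤ exp (2 Re w + |w|²/N)`. -/
lemma energy_upper {φ : ℝ → ℝ} (hφ : Continuous φ) (hpos : ∀ θ, 0 < φ θ) {H : ℂ[X]} {ε : ℝ}
    (hε : 0 < ε) (hH : ∀ θ, φ θ ≤ Real.exp ((H.eval (circlePt θ)).re + ε)) :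
    ∃ p : ℂ[X], p.eval 0 = 1 ∧ energy φ p ≤ Real.exp ((H.eval 0).re + 2 * ε) := by
  set w : ℂ[X] := C (1 / 2) * (C (H.eval 0) - H) with hw
  have hw0 : w.eval 0 = 0 := by simp [hw]
  obtain ⟨R, hR⟩ : ∃ R, ∀ z ∈ Metric.sphere (0 : ℂ) 1, ‖w.eval z‖ ≤ R :=
    (isCompact_sphere 0 1).exists_bound_of_continuousOn (by fun_prop)
  obtain ⟨N, hN⟩ := exists_nat_gt (R ^ 2 / ε)
  have hNpos : (0 : ℝ) < N := lt_of_le_of_lt (by positivity) hN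
  refine ⟨(1 + C (1 / (N : ℂ)) * w) ^ N, by simp [hw0], ?_⟩
  rw [← mean_const (Real.exp _)]
  refine mean_mono (continuous_energy_integrand hφ _) continuous_const fun θ => ?_
  set z := circlePt θ with hz
  have hwR : ‖w.eval z‖ ≤ R := hR z (by simp [hz, norm_circlePt])
  have hwsq : ‖w.eval z‖ ^ 2 / N ≤ ε := by
    rw [div_le_iff₀ hNpos]
    rw [div_lt_iff₀ hε] at hN
    have : ‖w.eval z‖ ^ 2 ≤ R ^ 2 := by gcongr
    linarith
  have hwre : 2 * (w.eval z).re = (H.eval 0).re - (H.eval z).re := by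
    simp [hw]
  have h1 : ‖1 + 1 / (N : ℂ) * w.eval z‖ ^ 2 ≤
      Real.exp ((2 * (w.eval z).re + ‖w.eval z‖ ^ 2 / N) / N) := by
    refine le_trans (le_of_eq ?_) (Real.add_one_le_exp _)
    have hre : (1 / (N : ℂ) * w.eval z) = ((1 / (N : ℝ) : ℝ) : ℂ) * w.eval z := by push_cast; rfl
    rw [hre, Complex.sq_norm, Complex.sq_norm, Complex.normSq_apply, Complex.normSq_apply]
    simp only [Complex.add_re, Complex.add_im, Complex.one_re, Complex.one_im,
      Complex.re_ofReal_mul, Complex.im_ofReal_mul]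
    field_simp
    ring
  have h2 : ‖((1 + C (1 / (N : ℂ)) * w) ^ N).eval z‖ ^ 2 ≤
      Real.exp (2 * (w.eval z).re + ‖w.eval z‖ ^ 2 / N) := by
    have : ((1 + C (1 / (N : ℂ)) * w) ^ N).eval z = (1 + 1 / (N : ℂ) * w.eval z) ^ N := by
      simp
    rw [this, norm_pow, ← pow_mul, mul_comm N 2, pow_mul]
    refine (pow_le_pow_left₀ (by positivity) h1 N).trans (le_of_eq ?_)
    rw [← Real.exp_nat_mul]
    congr 1
    field_simp
  calc _ ≤ Real.exp (2 * (w.eval z).re + ‖w.eval z‖ ^ 2 / N) *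
        Real.exp ((H.eval z).re + ε) := by
        gcongr
        · exact (hpos θ).le
        · exact hH θ
    _ ≤ _ := by
        rw [← Real.exp_add]
        exact Real.exp_le_exp.mpr (by linarith)

/-- The ratios of consecutive Toeplitz determinants converge, on the logarithmic scale, to the
mean of `log φ`. -/
lemma tendsto_log_ratio {φ : ℝ → ℝ} (hφ : Continuous φ)
    (hper : Function.Periodic φ (2 * Real.pi)) (hpos : ∀ θ, 0 < φ θ) :
    Tendsto (fun n : ℕ => Real.log ((toeplitzDet (fun θ => (φ θ : ℂ)) (n + 1)).re /
        (toeplitzDet (fun θ => (φ θ : ℂ)) n).re)) atTop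
      (𝓝 ((2 * Real.pi)⁻¹ * ∫ θ in (-Real.pi)..Real.pi, Real.log (φ θ))) := by
  set L := (2 * Real.pi)⁻¹ * ∫ θ in (-Real.pi)..Real.pi, Real.log (φ θ) with hL
  have hlog : Continuous fun θ => Real.log (φ θ) := hφ.log fun θ => (hpos θ).ne'
  rw [Metric.tendsto_atTop]
  intro δ hδ
  set ε := δ / 4 with hε
  have hε0 : 0 < ε := by positivity
  obtain ⟨H, hH⟩ := exists_poly_approx hlog (fun θ => by simp only [hper θ]) hε0
  have hHd : Differentiable ℂ fun z => H.eval z := by fun_prop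
  have hHc : Continuous fun θ => (H.eval (circlePt θ)).re :=
    Complex.continuous_re.comp (hHd.continuous.comp continuous_circlePt)
  have hmean := mean_re_circlePt hHd
  have hm1 : L - ε ≤ (H.eval 0).re := by
    have h := mean_mono (f := fun θ => Real.log (φ θ) - ε) (hlog.sub continuous_const) hHc
      (fun θ => (by linarith [(abs_le.mp (hH θ)).2] : Real.log (φ θ) - ε ≤ _))
    rw [hmean, intervalIntegral.integral_sub (hlog.intervalIntegrable _ _)
      (continuous_const.intervalIntegrable _ _), mul_sub, mean_const] at h
    exact h
  have hm2 : (H.eval 0).re ≤ L + ε := by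
    have h := mean_mono (g := fun θ => Real.log (φ θ) + ε) hHc (hlog.add continuous_const)
      (fun θ => (by linarith [(abs_le.mp (hH θ)).1] : _ ≤ Real.log (φ θ) + ε))
    rw [hmean, intervalIntegral.integral_add (hlog.intervalIntegrable _ _)
      (continuous_const.intervalIntegrable _ _), mul_add, mean_const] at h
    exact h
  have hlow : ∀ θ, Real.exp ((H.eval (circlePt θ)).re - ε) ≤ φ θ := fun θ => by
    rw [← Real.le_log_iff_exp_le (hpos θ)]
    linarith [(abs_le.mp (hH θ)).1]
  have hup : ∀ θ, φ θ ≤ Real.exp ((H.eval (circlePt θ)).re + ε) := fun θ => by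
    rw [← Real.log_le_iff_le_exp (hpos θ)]
    linarith [(abs_le.mp (hH θ)).2]
  obtain ⟨p, hp0, hp⟩ := energy_upper hφ hpos hε0 hup
  refine ⟨p.natDegree, fun n hn => ?_⟩
  obtain ⟨⟨q, ⟨-, hq0⟩, hq⟩, hmin⟩ := ratio_isLeast hφ hpos n
  have hmin' := hmin ⟨p, ⟨by omega, hp0⟩, rfl⟩
  set r := (toeplitzDet (fun θ => (φ θ : ℂ)) (n + 1)).re /
    (toeplitzDet (fun θ => (φ θ : ℂ)) n).re with hr
  have hr0 : 0 < r := div_pos (toeplitzDet_pos hφ hpos _).1 (toeplitzDet_pos hφ hpos _).1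
  have h1 : (H.eval 0).re - ε ≤ Real.log r := by
    rw [Real.le_log_iff_exp_le hr0, ← hq]; exact energy_lower hφ hlow hq0
  have h2 : Real.log r ≤ (H.eval 0).re + 2 * ε := by
    rw [Real.log_le_iff_le_exp hr0]; exact hmin'.trans hp
  rw [Real.dist_eq, abs_lt]
  constructor <;> linarith

/-- **Szegő's First Limit Theorem.** For a continuous positive symbol `φ` on the unit
circle, the Toeplitz determinants `D_n(φ)` are positive and
`(1/n) log D_n(φ) → (1/2π) ∫_{-π}^{π} log φ(e^{iθ}) dθ`. -/
theorem szego_first_limit_theorem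
    (φ : ℝ → ℝ) (hcont : Continuous φ) (hper : Function.Periodic φ (2 * Real.pi))
    (hpos : ∀ θ : ℝ, 0 < φ θ) :
    (∀ n : ℕ, 1 ≤ n → 0 < (toeplitzDet (fun θ => (φ θ : ℂ)) n).re ∧
      (toeplitzDet (fun θ => (φ θ : ℂ)) n).im = 0) ∧
    Tendsto (fun n : ℕ => Real.log ((toeplitzDet (fun θ => (φ θ : ℂ)) n).re) / n)
      atTop
      (𝓝 ((2 * Real.pi)⁻¹ * ∫ θ in (-Real.pi)..Real.pi, Real.log (φ θ))) := by
  refine ⟨fun n _ => toeplitzDet_pos hcont hpos n, ?_⟩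
  refine (tendsto_log_ratio hcont hper hpos).cesaro.congr fun n => ?_
  have h : ∀ k, Real.log ((toeplitzDet (fun θ => (φ θ : ℂ)) (k + 1)).re /
      (toeplitzDet (fun θ => (φ θ : ℂ)) k).re) =
      Real.log (toeplitzDet (fun θ => (φ θ : ℂ)) (k + 1)).re -
        Real.log (toeplitzDet (fun θ => (φ θ : ℂ)) k).re := fun k =>
    Real.log_div (toeplitzDet_pos hcont hpos _).1.ne'
      (ne_of_gt (toeplitzDet_pos hcont hpos _).1)
  -- The empty determinant is `1`, so the telescoping sum has no boundary term at `0`.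
  have h0 : toeplitzDet (fun θ => (φ θ : ℂ)) 0 = 1 := by simp [toeplitzDet]
  simp only [h]
  rw [Finset.sum_range_sub (fun k => Real.log (toeplitzDet (fun θ => (φ θ : ℂ)) k).re), h0]
  simp [div_eq_inv_mul]
end

section
/- Dichotomy for Fisher–Hartwig representations (Lemma on the orbit minimization): Let m ≥ 0 and let β = (β_0, …, β_m) ∈ ℂ^{m+1}. Define the orbit O_β = { β̂ : β̂_j = β_j + n_j with n_j ∈ ℤ and ∑_{j=0}^{m} n_j = 0 }, the seminorm |||β̂||| = max_{0≤j,k≤m} |Re β̂_j − Re β̂_k|, and the set of minimizers M_β = { β̂ ∈ O_β : ∑_{j=0}^{m} (Re β̂_j)² = min_{γ ∈ O_β} ∑_{j=0}^{m} (Re γ_j)² }. Then exactly one of the following two possibilities holds: (i) there exists β̂ ∈ O_β with |||β̂||| < 1; in this case such β̂ is unique and M_β = {β̂}; or (ii) there exists β̂ ∈ O_β with |||β̂||| = 1; in this case there are at least two such elements and M_β = { β̂ ∈ O_β : |||β̂||| = 1 }. -/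
/-!
Write `x_j = Re b_j` and let `a = min_j x_j`. Moving `b` by an integer vector `n` of sum zero
changes the energy `∑ x_j²` by `∑ (2 (x_j - a) n_j + n_j² - n_j)`, because `∑ n_j = 0` allows
any multiple of `n_j` to be added to each term. If all `x_j - a` lie in `[0, 1]`, each term is
nonnegative, so every `b` of seminorm at most `1` is a minimizer (`energy_le_of_seminorm_le_one`);
if they lie in `[0, 1)`, the terms can vanish only when `n ≥ 0`, hence `n = 0`, so a `b` of
seminorm less than `1` is the only minimizer (`eq_of_energy_le`).

Conversely, moving one unit from coordinate `j` to coordinate `k` changes the energy by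
`2 (1 - (x_j - x_k))`. This is negative when `x_j - x_k > 1`, so minimizers have seminorm at most
`1` (`seminorm_le_one_of_mem`); it is zero when `x_j - x_k = 1`, so a minimizer of seminorm
exactly `1` comes with a second one. As only finitely many orbit points lie below a given energy,
a minimizer exists, and the dichotomy follows.
-/

open Filter Topology

/-- The Fisher–Hartwig orbit `O_β` of `β ∈ ℂ^{m+1}`: all `β̂` with `β̂_j = β_j + n_j`,
`n_j ∈ ℤ`, `∑ n_j = 0`. -/
def fhOrbit {m : ℕ} (β : Fin (m + 1) → ℂ) : Set (Fin (m + 1) → ℂ) :=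
  {b | ∃ n : Fin (m + 1) → ℤ, (∑ j, n j) = 0 ∧ b = fun j => β j + (n j : ℂ)}

/-- The seminorm `|||b||| = max_{j,k} |Re b_j − Re b_k|`. -/
noncomputable def fhSeminorm {m : ℕ} (b : Fin (m + 1) → ℂ) : ℝ :=
  ⨆ p : Fin (m + 1) × Fin (m + 1), |(b p.1).re - (b p.2).re|

/-- The set `M_β` of minimizers of `∑_j (Re b_j)²` over the orbit `O_β`. -/
def fhMinimizers {m : ℕ} (β : Fin (m + 1) → ℂ) : Set (Fin (m + 1) → ℂ) :=
  {b | b ∈ fhOrbit β ∧ ∀ c ∈ fhOrbit β, ∑ j, ((b j).re) ^ 2 ≤ ∑ j, ((c j).re) ^ 2}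

lemma fhSeminorm_le_iff {m : ℕ} (b : Fin (m + 1) → ℂ) (r : ℝ) :
    fhSeminorm b ≤ r ↔ ∀ j k, (b j).re - (b k).re ≤ r := by
  unfold fhSeminorm
  rw [ciSup_le_iff (Set.finite_range _).bddAbove]
  constructor
  · intro h j k
    exact (le_abs_self _).trans (h (j, k))
  · rintro h ⟨j, k⟩
    exact abs_le.2 ⟨by linarith [h k j], h j k⟩

lemma exists_fhSeminorm_eq {m : ℕ} (b : Fin (m + 1) → ℂ) :
    ∃ j k, (b j).re - (b k).re = fhSeminorm b := by
  obtain ⟨⟨j, k⟩, h⟩ := exists_eq_ciSup_of_finite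
    (f := fun p : Fin (m + 1) × Fin (m + 1) => |(b p.1).re - (b p.2).re|)
  change |(b j).re - (b k).re| = fhSeminorm b at h
  rcases abs_choice ((b j).re - (b k).re) with h' | h'
  · exact ⟨j, k, by rw [← h, h']⟩
  · exact ⟨k, j, by rw [← h, h']; ring⟩

lemma sub_le_fhSeminorm {m : ℕ} (b : Fin (m + 1) → ℂ) (j k : Fin (m + 1)) :
    (b j).re - (b k).re ≤ fhSeminorm b :=
  (fhSeminorm_le_iff b _).1 le_rfl j k

lemma self_mem_fhOrbit {m : ℕ} (β : Fin (m + 1) → ℂ) : β ∈ fhOrbit β :=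
  ⟨0, by simp, by simp⟩

lemma fhOrbit_trans {m : ℕ} {β b c : Fin (m + 1) → ℂ} (hb : b ∈ fhOrbit β)
    (hc : c ∈ fhOrbit b) : c ∈ fhOrbit β := by
  obtain ⟨n, hn, rfl⟩ := hb
  obtain ⟨k, hk, rfl⟩ := hc
  refine ⟨n + k, by simp [Finset.sum_add_distrib, hn, hk], ?_⟩
  funext j
  simp [add_assoc]

lemma fhOrbit_symm {m : ℕ} {β b : Fin (m + 1) → ℂ} (hb : b ∈ fhOrbit β) : β ∈ fhOrbit b := by
  obtain ⟨n, hn, rfl⟩ := hb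
  exact ⟨-n, by simp [hn], by funext j; simp⟩

/-- The change of energy under a translation of sum zero, relative to an arbitrary base level
`a`. -/
lemma energy_sub {m : ℕ} (b : Fin (m + 1) → ℂ) (n : Fin (m + 1) → ℤ) (hn : ∑ j, n j = 0)
    (a : ℝ) :
    ∑ j, ((b j + (n j : ℂ)).re) ^ 2 - ∑ j, ((b j).re) ^ 2
      = ∑ j, (2 * ((b j).re - a) * n j + (n j : ℝ) ^ 2 - n j) := by
  have hn' : ∑ j, (n j : ℝ) = 0 := by exact_mod_cast hn
  have h : ∑ j, (2 * a + 1) * (n j : ℝ) = 0 := by rw [← Finset.mul_sum, hn', mul_zero]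
  rw [← Finset.sum_sub_distrib, ← sub_zero (∑ j, (_ - _ : ℝ)), ← h, ← Finset.sum_sub_distrib]
  refine Finset.sum_congr rfl fun j _ => ?_
  simp
  ring

/-- For an integer `n`, both endpoint values `n² - n` at `t = 0` and `n² + n` at `t = 1` are
nonnegative, and the expression is affine in `t`. -/
lemma term_nonneg (t : ℝ) (h0 : 0 ≤ t) (h1 : t ≤ 1) (n : ℤ) :
    0 ≤ 2 * t * n + (n : ℝ) ^ 2 - n := by
  rcases le_or_gt 1 n with h | h
  · have : (1 : ℝ) ≤ n := by exact_mod_cast h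
    nlinarith
  rcases eq_or_lt_of_le (Int.lt_add_one_iff.1 (by simpa using h) : n ≤ 0) with h' | h'
  · simp [h']
  · have : (n : ℝ) ≤ -1 := by exact_mod_cast (by omega : n ≤ -1)
    nlinarith

lemma energy_le_of_seminorm_le_one {m : ℕ} {b c : Fin (m + 1) → ℂ} (hb : fhSeminorm b ≤ 1)
    (hc : c ∈ fhOrbit b) : ∑ j, ((b j).re) ^ 2 ≤ ∑ j, ((c j).re) ^ 2 := by
  obtain ⟨n, hn, rfl⟩ := hc
  obtain ⟨i, hi⟩ := Finite.exists_min fun j => (b j).re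
  rw [← sub_nonneg, energy_sub b n hn (b i).re]
  exact Finset.sum_nonneg fun j _ => term_nonneg _ (sub_nonneg.2 (hi j))
    ((fhSeminorm_le_iff b 1).1 hb j i) _

lemma eq_of_energy_le {m : ℕ} {b c : Fin (m + 1) → ℂ} (hb : fhSeminorm b < 1)
    (hc : c ∈ fhOrbit b) (hle : ∑ j, ((c j).re) ^ 2 ≤ ∑ j, ((b j).re) ^ 2) : c = b := by
  obtain ⟨n, hn, rfl⟩ := hc
  obtain ⟨i, hi⟩ := Finite.exists_min fun j => (b j).re
  have hlt : ∀ j, (b j).re - (b i).re < 1 := fun j => (sub_le_fhSeminorm b j i).trans_lt hb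
  have hterm : ∀ j ∈ Finset.univ, 0 ≤ 2 * ((b j).re - (b i).re) * n j + (n j : ℝ) ^ 2 - n j :=
    fun j _ => term_nonneg _ (sub_nonneg.2 (hi j)) (hlt j).le _
  have hsum := energy_sub b n hn (b i).re
  have hzero := (Finset.sum_eq_zero_iff_of_nonneg hterm).1
    (le_antisymm (by linarith) (Finset.sum_nonneg hterm))
  have hnn : ∀ j ∈ Finset.univ, 0 ≤ n j := by
    intro j hj
    by_contra! hneg
    have h1 : (n j : ℝ) ≤ -1 := by exact_mod_cast (by omega : n j ≤ -1)
    have h2 := hzero j hj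
    have h3 := hlt j
    nlinarith
  have hn0 := (Finset.sum_eq_zero_iff_of_nonneg hnn).1 hn
  funext j
  simp [hn0 j (Finset.mem_univ j)]

/-- Moving one unit from coordinate `j` to coordinate `k`. -/
lemma exists_transfer {m : ℕ} (b : Fin (m + 1) → ℂ) {j k : Fin (m + 1)} (hjk : j ≠ k) :
    ∃ c ∈ fhOrbit b, c j = b j - 1 ∧ c k = b k + 1 ∧
      ∑ i, ((c i).re) ^ 2 = ∑ i, ((b i).re) ^ 2 + 2 * (1 - ((b j).re - (b k).re)) := by
  set n : Fin (m + 1) → ℤ := Pi.single k 1 - Pi.single j 1 with hndef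
  have hn : ∑ i, n i = 0 := by simp [hndef]
  refine ⟨_, ⟨n, hn, rfl⟩, ?_, ?_, ?_⟩
  · simp [hndef, hjk, sub_eq_add_neg]
  · simp [hndef, hjk.symm]
  · have h := energy_sub b n hn 0
    rw [← sub_eq_iff_eq_add', h, Fintype.sum_eq_add j k hjk]
    · simp [hndef, hjk, hjk.symm]
      ring
    · rintro i ⟨hij, hik⟩
      simp [hndef, hij, hik]

lemma seminorm_le_one_of_mem {m : ℕ} {β b : Fin (m + 1) → ℂ} (hb : b ∈ fhMinimizers β) :
    fhSeminorm b ≤ 1 := by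
  rw [fhSeminorm_le_iff]
  intro j k
  by_contra! h
  have hjk : j ≠ k := by
    rintro rfl
    simp at h
    linarith
  obtain ⟨c, hc, -, -, hE⟩ := exists_transfer b hjk
  have := hb.2 c (fhOrbit_trans hb.1 hc)
  linarith

lemma mem_fhMinimizers_of_le {m : ℕ} {β b : Fin (m + 1) → ℂ} (hb : b ∈ fhOrbit β)
    (h : fhSeminorm b ≤ 1) : b ∈ fhMinimizers β :=
  ⟨hb, fun _ hc => energy_le_of_seminorm_le_one h (fhOrbit_trans (fhOrbit_symm hb) hc)⟩

/-- The minimum of the energy is attained: only finitely many orbit points have energy at most that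
of `β`. -/
lemma exists_mem_fhMinimizers {m : ℕ} (β : Fin (m + 1) → ℂ) : ∃ b, b ∈ fhMinimizers β := by
  set E : (Fin (m + 1) → ℂ) → ℝ := fun b => ∑ j, ((b j).re) ^ 2 with hE
  set S : Set (Fin (m + 1) → ℂ) := {b | b ∈ fhOrbit β ∧ E b ≤ E β} with hS
  have hfin : S.Finite := by
    -- Each coordinate of `n` is bounded, since `(Re β_j + n_j)²` is at most the energy of `β`.
    refine ((Set.Finite.pi' fun j : Fin (m + 1) => Set.finite_Icc
      ⌊-(E β + 1) - (β j).re⌋ ⌈E β + 1 - (β j).re⌉).image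
        (fun n : Fin (m + 1) → ℤ => fun j => β j + (n j : ℂ))).subset ?_
    rintro _ ⟨⟨n, hn, rfl⟩, hle⟩
    refine ⟨n, fun j => ?_, rfl⟩
    have h1 : ((β j + (n j : ℂ)).re) ^ 2 ≤ E β :=
      (Finset.single_le_sum (f := fun j => ((β j + (n j : ℂ)).re) ^ 2)
        (fun i _ => sq_nonneg _) (Finset.mem_univ j)).trans hle
    have h2 : (β j + (n j : ℂ)).re = (β j).re + n j := by simp
    rw [h2] at h1
    constructor
    · have : (⌊-(E β + 1) - (β j).re⌋ : ℝ) ≤ n j :=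
        (Int.floor_le _).trans (by nlinarith [sq_nonneg ((β j).re + n j + 1)])
      exact_mod_cast this
    · have : (n j : ℝ) ≤ ⌈E β + 1 - (β j).re⌉ :=
        le_trans (by nlinarith [sq_nonneg ((β j).re + n j - 1)]) (Int.le_ceil _)
      exact_mod_cast this
  obtain ⟨b, hb, hmin⟩ := Set.exists_min_image S E hfin ⟨β, self_mem_fhOrbit β, le_rfl⟩
  refine ⟨b, hb.1, fun c hc => ?_⟩
  rcases le_total (E c) (E β) with h | h
  · exact hmin c ⟨hc, h⟩
  · exact hb.2.trans h

lemma eq_of_seminorm_lt {m : ℕ} {β b c : Fin (m + 1) → ℂ} (hb : b ∈ fhOrbit β)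
    (h : fhSeminorm b < 1) (hc : c ∈ fhMinimizers β) : c = b :=
  eq_of_energy_le h (fhOrbit_trans (fhOrbit_symm hb) hc.1) (hc.2 b hb)

/-- **Dichotomy for Fisher–Hartwig representations.** Exactly one of the following holds:
(i) there is `β̂ ∈ O_β` with `|||β̂||| < 1`; then it is unique and `M_β = {β̂}`;
(ii) there is `β̂ ∈ O_β` with `|||β̂||| = 1`; then there are at least two such elements and
`M_β = {β̂ ∈ O_β : |||β̂||| = 1}`. -/
theorem fisher_hartwig_dichotomy {m : ℕ} (β : Fin (m + 1) → ℂ) :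
    Xor' (∃ b ∈ fhOrbit β, fhSeminorm b < 1) (∃ b ∈ fhOrbit β, fhSeminorm b = 1) ∧
    ((∃ b ∈ fhOrbit β, fhSeminorm b < 1) →
      ∃ b, (b ∈ fhOrbit β ∧ fhSeminorm b < 1) ∧
        (∀ c, c ∈ fhOrbit β → fhSeminorm c < 1 → c = b) ∧
        fhMinimizers β = {b}) ∧
    ((∃ b ∈ fhOrbit β, fhSeminorm b = 1) →
      (∃ b ∈ fhOrbit β, ∃ c ∈ fhOrbit β,
        fhSeminorm b = 1 ∧ fhSeminorm c = 1 ∧ b ≠ c) ∧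
      fhMinimizers β = {b ∈ fhOrbit β | fhSeminorm b = 1}) := by
  have hexcl : ∀ b ∈ fhOrbit β, ∀ c ∈ fhOrbit β, fhSeminorm b < 1 → fhSeminorm c = 1 → False := by
    intro b hb c hc h1 h2
    rw [eq_of_seminorm_lt hb h1 (mem_fhMinimizers_of_le hc h2.le)] at h2
    exact h1.ne h2
  refine ⟨?_, ?_, ?_⟩
  · obtain ⟨b, hb⟩ := exists_mem_fhMinimizers β
    rcases (seminorm_le_one_of_mem hb).lt_or_eq with h | h
    · exact Or.inl ⟨⟨b, hb.1, h⟩, fun ⟨c, hc, h'⟩ => hexcl b hb.1 c hc h h'⟩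
    · exact Or.inr ⟨⟨b, hb.1, h⟩, fun ⟨c, hc, h'⟩ => hexcl c hc b hb.1 h' h⟩
  · rintro ⟨b, hb, h⟩
    refine ⟨b, ⟨hb, h⟩, fun c hc h' => ?_, ?_⟩
    · exact eq_of_seminorm_lt hb h (mem_fhMinimizers_of_le hc h'.le)
    · ext c
      constructor
      · exact fun hc => eq_of_seminorm_lt hb h hc
      · rintro rfl
        exact mem_fhMinimizers_of_le hb h.le
  · rintro ⟨b, hb, h⟩
    constructor
    · obtain ⟨j, k, hjk⟩ := exists_fhSeminorm_eq b
      rw [h] at hjk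
      have hne : j ≠ k := by
        rintro rfl
        simp at hjk
      obtain ⟨c, hc, hcj, hck, hE⟩ := exists_transfer b hne
      have hcO := fhOrbit_trans hb hc
      have hcM : c ∈ fhMinimizers β := by
        refine ⟨hcO, fun d hd => ?_⟩
        rw [hE, hjk]
        simpa using (mem_fhMinimizers_of_le hb h.le).2 d hd
      -- The transfer exchanges the real parts at `j` and `k`, so the gap of `1` persists.
      refine ⟨b, hb, c, hcO, h, le_antisymm (seminorm_le_one_of_mem hcM) ?_, ?_⟩
      · have h1 := sub_le_fhSeminorm c k j
        rw [hcj, hck] at h1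
        simp at h1
        linarith
      · intro hbc
        rw [← hbc] at hcj
        have h1 := congrArg Complex.re hcj
        simp only [Complex.sub_re, Complex.one_re] at h1
        linarith
    · ext c
      constructor
      · intro hc
        refine ⟨hc.1, (seminorm_le_one_of_mem hc).lt_or_eq.resolve_left fun h' => ?_⟩
        exact hexcl c hc.1 b hb h' h
      · rintro ⟨hc, h'⟩
        exact mem_fhMinimizers_of_le hc h'.le
end

section
/- Carathéodory–Toeplitz theorem: Let c_0 ∈ ℝ and c_1, …, c_n ∈ ℂ, and set c_{-k} = conj(c_k) for 0 ≤ k ≤ n. Then there exists an analytic function φ on the open unit disk 𝔻 = {|z| < 1} with Re φ(z) ≥ 0 on 𝔻 whose Taylor coefficients at 0 satisfy φ^{(j)}(0)/j! = c_j for 0 ≤ j ≤ n, if and only if the (n+1)×(n+1) Hermitian Toeplitz matrix A with entries A_{jk} = c_{k-j} for j ≠ k and A_{jj} = 2c_0 on the diagonal (0 ≤ j, k ≤ n) is positive semidefinite. -/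
open Complex
open scoped ComplexOrder

/-!
If `φ` exists, let `q z = ∑ k, x k * (conj z) ^ k`. On the circle `|z| = r < 1`, Cauchy's formula
shows that the average of `2 Re φ(z) * z ^ j * (conj z) ^ k` is `r ^ (2 * max j k)` times the
Toeplitz entry `A j k` (`moment_eq`). So the average of `2 Re φ * |q|²`, which is nonnegative,
tends to the quadratic form of `A` at `x` as `r → 1` (`posSemidef_of_extension`).

Conversely, if `A` is positive semidefinite, it is the Gram matrix of vectors `u 0, …, u n` of a
finite-dimensional Hilbert space (`exists_gram_vectors`). Since `A` is constant along diagonals,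
`u j ↦ u (j + 1)` preserves inner products, hence is the restriction of an isometry `U`
(`exists_shift_isometry`). Thus `u k = U ^ k (u 0)` and `c k = ⟪u 0, U ^ k (u 0)⟫` for
`1 ≤ k ≤ n`, and this formula continues the sequence `c` to all `k`. The resulting power series
has bounded coefficients, hence converges on the disk, and its sum has nonnegative real part because
`U` is an isometry (`re_nonneg_of_isometry`).
-/

/-! ### From a positive semidefinite matrix to a power series -/

theorem exists_gram_vectors {n : ℕ} {A : Matrix (Fin n) (Fin n) ℂ} (hA : A.PosSemidef) :
    ∃ (m : ℕ) (u : Fin n → EuclideanSpace ℂ (Fin m)), ∀ j k, inner ℂ (u j) (u k) = A j k := by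
  obtain ⟨m, v, rfl⟩ := Matrix.posSemidef_iff_eq_sum_vecMulVec.mp hA
  refine ⟨m, fun j => WithLp.toLp 2 fun i => star (v i j), fun j k => ?_⟩
  simp [PiLp.inner_apply, Matrix.sum_apply, Matrix.vecMulVec_apply, mul_comm]

/-- If translating the indices of `u` by one preserves all inner products, then the shift
`u j ↦ u (j + 1)` is implemented by a linear isometry of the whole (finite-dimensional) space. -/
theorem exists_shift_isometry {V : Type*} [NormedAddCommGroup V] [InnerProductSpace ℂ V]
    [FiniteDimensional ℂ V] {n : ℕ} (u : Fin (n + 1) → V)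
    (hu : ∀ j k : Fin n, inner ℂ (u j.castSucc) (u k.castSucc) = inner ℂ (u j.succ) (u k.succ)) :
    ∃ U : V →ₗᵢ[ℂ] V, ∀ j : Fin n, U (u j.castSucc) = u j.succ := by
  let T₁ : (Fin n → ℂ) →ₗ[ℂ] V := Fintype.linearCombination ℂ fun j : Fin n => u j.castSucc
  let T₂ : (Fin n → ℂ) →ₗ[ℂ] V := Fintype.linearCombination ℂ fun j : Fin n => u j.succ
  have hnorm : ∀ x, ‖T₂ x‖ = ‖T₁ x‖ := by
    intro x
    have : inner ℂ (T₁ x) (T₁ x) = inner ℂ (T₂ x) (T₂ x) := by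
      simp only [T₁, T₂, Fintype.linearCombination_apply, sum_inner, inner_sum, inner_smul_left,
        inner_smul_right, hu]
    rw [inner_self_eq_norm_sq_to_K, inner_self_eq_norm_sq_to_K] at this
    have h2 : ‖T₁ x‖ ^ 2 = ‖T₂ x‖ ^ 2 := by exact_mod_cast this
    exact ((sq_eq_sq₀ (norm_nonneg _) (norm_nonneg _)).mp h2).symm
  -- `T₂` factors through `T₁`, since it kills the kernel of `T₁`.
  obtain ⟨g, hg⟩ := T₁.rangeRestrict.exists_rightInverse_of_surjective T₁.range_rangeRestrict
  have hg' : ∀ y : LinearMap.range T₁, T₁ (g y) = y := fun y =>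
    congrArg Subtype.val (LinearMap.congr_fun hg y)
  let L : LinearMap.range T₁ →ₗᵢ[ℂ] V :=
    { toLinearMap := T₂ ∘ₗ g
      norm_map' := fun y => by
        rw [LinearMap.comp_apply, hnorm, hg', Submodule.coe_norm] }
  have hL : ∀ x, L ⟨T₁ x, x, rfl⟩ = T₂ x := by
    intro x
    change T₂ (g _) = T₂ x
    rw [← sub_eq_zero, ← map_sub, ← norm_eq_zero, hnorm, map_sub, hg', sub_self, norm_zero]
  refine ⟨L.extend, fun j => ?_⟩
  have h1 : T₁ (Pi.single j 1) = u j.castSucc := by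
    simp [T₁, Fintype.linearCombination_apply_single]
  have h2 : T₂ (Pi.single j 1) = u j.succ := by
    simp [T₂, Fintype.linearCombination_apply_single]
  rw [← h1, ← h2, ← hL]
  exact L.extend_apply ⟨T₁ (Pi.single j 1), _, rfl⟩

/-- If `a 0 = ⟪v, v⟫ / 2` and `a k = ⟪v, U ^ k v⟫` for `k > 0`, with `U` an isometry, then
`∑ a k z ^ k = ⟪v, w⟫ - ⟪v, v⟫ / 2` where `w = (1 - zU)⁻¹ v`, and
`2 Re (∑ a k z ^ k) = ‖w‖² - ‖w - v‖² = (1 - |z|²) ‖w‖² ≥ 0`. -/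
theorem re_nonneg_of_isometry {V : Type*} [NormedAddCommGroup V] [InnerProductSpace ℂ V]
    [CompleteSpace V] (U : V →ₗᵢ[ℂ] V) (v : V) (a : ℕ → ℂ) (ha0 : 2 * a 0 = inner ℂ v v)
    (ha : ∀ k, 0 < k → a k = inner ℂ v ((U ^ k) v)) {z : ℂ} (hz : ‖z‖ < 1) {s : ℂ}
    (hs : HasSum (fun k => a k * z ^ k) s) : 0 ≤ s.re := by
  have hnorm : ∀ k : ℕ, ‖(U ^ k) v‖ = ‖v‖ := fun k => (U ^ k).norm_map v
  have hsum : Summable fun k : ℕ => z ^ k • (U ^ k) v := by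
    refine Summable.of_norm ?_
    simp only [norm_smul, norm_pow, hnorm]
    exact (summable_geometric_of_lt_one (norm_nonneg _) hz).mul_right _
  set w := ∑' k : ℕ, z ^ k • (U ^ k) v with hw
  have hwv : w = v + z • U w := by
    have hUw : U w = ∑' k : ℕ, U (z ^ k • (U ^ k) v) :=
      ContinuousLinearMap.map_tsum U.toContinuousLinearMap hsum
    have hUs : Summable fun k : ℕ => U (z ^ k • (U ^ k) v) :=
      hsum.mapL U.toContinuousLinearMap
    rw [hUw, ← hUs.tsum_const_smul z, hw, hsum.tsum_eq_zero_add]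
    simp [pow_succ', smul_smul]
  have hsw : s = inner ℂ v w - inner ℂ v v / 2 := by
    have h1 : HasSum (fun k : ℕ => inner ℂ v (z ^ k • (U ^ k) v)) (inner ℂ v w) :=
      hsum.hasSum.mapL (innerSL ℂ v)
    have h2 := h1.sub (hasSum_ite_eq 0 (inner ℂ v v / 2 : ℂ))
    refine hs.unique (h2.congr_fun ?_)
    intro k
    rcases Nat.eq_zero_or_pos k with rfl | hk
    · simp only [pow_zero, one_smul, LinearIsometry.coe_one, id_eq, if_true, ← ha0]
      ring
    · simp [ha k hk, hk.ne', mul_comm]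
  have hnn : ‖w - v‖ ≤ ‖w‖ := by
    have : w - v = z • U w := by rw [sub_eq_iff_eq_add']; exact hwv
    rw [this, norm_smul, U.norm_map]
    exact mul_le_of_le_one_left (norm_nonneg _) hz.le
  have h3 := norm_sub_sq (𝕜 := ℂ) w v
  have h4 : RCLike.re (inner ℂ w v) = (inner ℂ v w : ℂ).re := inner_re_symm ..
  have h5 : (inner ℂ v v : ℂ).re = ‖v‖ ^ 2 := inner_self_eq_norm_sq (𝕜 := ℂ) v
  have h6 : ‖w - v‖ ^ 2 ≤ ‖w‖ ^ 2 := by gcongr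
  have : s.re = (inner ℂ v w : ℂ).re - ‖v‖ ^ 2 / 2 := by
    rw [hsw, Complex.sub_re, ← h5]
    congr 1
    simp
  rw [this]; linarith

theorem exists_analytic_of_bounded_coeff (a : ℕ → ℂ) (C : ℝ) (ha : ∀ k, ‖a k‖ ≤ C) :
    ∃ φ : ℂ → ℂ, DifferentiableOn ℂ φ (Metric.ball 0 1) ∧
      (∀ z ∈ Metric.ball (0 : ℂ) 1, HasSum (fun k => a k * z ^ k) (φ z)) ∧
      ∀ j, iteratedDeriv j φ 0 / (Nat.factorial j : ℂ) = a j := by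
  let p := FormalMultilinearSeries.ofScalars ℂ a
  have hr : (1 : ENNReal) ≤ p.radius := by
    refine p.le_radius_of_bound C (r := 1) fun k => ?_
    simpa [p, FormalMultilinearSeries.ofScalars_norm] using ha k
  have hp := (p.hasFPowerSeriesOnBall (zero_lt_one.trans_le hr)).mono zero_lt_one hr
  have hball : Metric.eball (0 : ℂ) 1 = Metric.ball 0 1 := by
    simpa using Metric.eball_ofReal (x := (0 : ℂ)) (ε := 1)
  refine ⟨p.sum, hball ▸ hp.differentiableOn, fun z hz => ?_, fun j => ?_⟩
  · have := hp.hasSum (y := z) (by rwa [hball])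
    simpa [p, FormalMultilinearSeries.ofScalars_apply_eq, mul_comm] using this
  · have h := hp.hasFPowerSeriesAt.eq_formalMultilinearSeries
      hp.analyticAt.hasFPowerSeriesAt
    have := congrArg (fun q => q.coeff j) h
    simpa [p, FormalMultilinearSeries.coeff_ofScalars] using this.symm

/-! ### Positivity of the moments of `2 Re φ` -/

section Necessity

open Metric

/-- Cauchy's formula for the Taylor coefficients: on `|z| = r` one has `conj z = r ^ 2 / z`. -/
theorem circleAverage_mul_conj_pow {φ : ℂ → ℂ} (hφ : DifferentiableOn ℂ φ (ball 0 1)) {r : ℝ}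
    (hr0 : 0 < r) (hr1 : r < 1) (m : ℕ) :
    Real.circleAverage (fun z => φ z * (starRingEnd ℂ) z ^ m) 0 r
      = r ^ (2 * m) * (iteratedDeriv m φ 0 / m.factorial) := by
  have hφ' : DifferentiableOn ℂ φ (closedBall 0 r) := hφ.mono (closedBall_subset_ball hr1)
  have h := hφ'.circleIntegral_one_div_sub_center_pow_smul hr0 m
  rw [Real.circleAverage_eq_circleIntegral hr0.ne']
  have : ∮ z in C(0, r), (z - 0)⁻¹ • (φ z * (starRingEnd ℂ) z ^ m)
      = ∮ z in C(0, r), (r : ℂ) ^ (2 * m) • ((1 / (z - 0) ^ (m + 1)) • φ z) := by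
    refine circleIntegral.integral_congr hr0.le fun z hz => ?_
    have hz' : ‖z‖ = r := by simpa using hz
    have hz0 : z ≠ 0 := by rintro rfl; simp at hz'; exact hr0.ne hz'
    have hzz : (starRingEnd ℂ) z = r ^ 2 / z := by
      rw [eq_div_iff hz0, mul_comm, Complex.mul_conj, Complex.normSq_eq_norm_sq, hz']; simp
    simp only [hzz, smul_eq_mul, sub_zero, div_pow, pow_mul, pow_succ z]
    field_simp
  rw [this, circleIntegral.integral_smul, h]
  simp only [smul_eq_mul]
  field_simp [Complex.two_pi_I_ne_zero]

theorem circleAverage_mul_pow {φ : ℂ → ℂ} (hφ : DifferentiableOn ℂ φ (ball 0 1)) {r : ℝ}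
    (hr0 : 0 < r) (hr1 : r < 1) (m : ℕ) :
    Real.circleAverage (fun z => φ z * z ^ m) 0 r = if m = 0 then φ 0 else 0 := by
  have hφ' : DifferentiableOn ℂ (fun z => φ z * z ^ m) (ball 0 1) := by fun_prop
  have := circleAverage_mul_conj_pow hφ' hr0 hr1 0
  simp only [pow_zero, mul_one, mul_zero, iteratedDeriv_zero] at this
  rw [this]
  rcases eq_or_ne m 0 with rfl | hm <;> simp [*]

theorem circleAverage_conj {f : ℂ → ℂ} {r : ℝ} (hf : CircleIntegrable f 0 r) :
    Real.circleAverage (fun z => (starRingEnd ℂ) (f z)) 0 r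
      = (starRingEnd ℂ) (Real.circleAverage f 0 r) :=
  ContinuousLinearMap.circleAverage_comp_comm (conjCLE : ℂ →L[ℝ] ℂ) hf

/-- The Fourier coefficients of `2 Re φ = φ + conj φ` on the circle `|z| = r`; the second summand
contributes only to the constant one. -/
theorem circleAverage_re_mul_conj_pow {φ : ℂ → ℂ} (hφ : DifferentiableOn ℂ φ (ball 0 1)) {r : ℝ}
    (hr0 : 0 < r) (hr1 : r < 1) (m : ℕ) :
    Real.circleAverage (fun z => ((2 * (φ z).re : ℝ) : ℂ) * (starRingEnd ℂ) z ^ m) 0 r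
      = r ^ (2 * m) * (iteratedDeriv m φ 0 / m.factorial)
        + if m = 0 then (starRingEnd ℂ) (φ 0) else 0 := by
  have hc : ContinuousOn φ (sphere 0 r) :=
    hφ.continuousOn.mono (sphere_subset_closedBall.trans (closedBall_subset_ball hr1))
  have h1 : CircleIntegrable (fun z => φ z * (starRingEnd ℂ) z ^ m) 0 r :=
    ContinuousOn.circleIntegrable hr0.le (by fun_prop)
  have h2 : CircleIntegrable (fun z => φ z * z ^ m) 0 r :=
    ContinuousOn.circleIntegrable hr0.le (by fun_prop)
  have h3 : CircleIntegrable (fun z => (starRingEnd ℂ) (φ z * z ^ m)) 0 r :=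
    ContinuousOn.circleIntegrable hr0.le (by fun_prop)
  have : (fun z => ((2 * (φ z).re : ℝ) : ℂ) * (starRingEnd ℂ) z ^ m)
      = fun z => φ z * (starRingEnd ℂ) z ^ m + (starRingEnd ℂ) (φ z * z ^ m) := by
    ext z
    rw [← Complex.add_conj]; simp; ring
  rw [this, Real.circleAverage_fun_add h1 h3, circleAverage_conj h2,
    circleAverage_mul_conj_pow hφ hr0 hr1, circleAverage_mul_pow hφ hr0 hr1]
  congr 1
  split_ifs <;> simp

/-- The moments of `2 Re φ` on the circle `|z| = r` are the Toeplitz entries, up to factors that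
tend to `1` as `r → 1`. -/
theorem moment_eq {φ : ℂ → ℂ} (hφ : DifferentiableOn ℂ φ (ball 0 1)) {r : ℝ}
    (hr0 : 0 < r) (hr1 : r < 1) {n : ℕ} {c : ℕ → ℂ} (hc0 : (c 0).im = 0)
    (hc : ∀ j ≤ n, iteratedDeriv j φ 0 / (Nat.factorial j : ℂ) = c j) (j k : Fin (n + 1)) :
    Real.circleAverage (fun z => ((2 * (φ z).re : ℝ) : ℂ) *
        (z ^ (j : ℕ) * (starRingEnd ℂ) z ^ (k : ℕ))) 0 r
      = r ^ (2 * max (j : ℕ) k) * (if j = k then 2 * c 0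
        else if (j : ℕ) < (k : ℕ) then c ((k : ℕ) - (j : ℕ))
        else (starRingEnd ℂ) (c ((j : ℕ) - (k : ℕ)))) := by
  have hφ0 : φ 0 = c 0 := by simpa using hc 0 n.zero_le
  have hcont : ContinuousOn φ (sphere 0 r) :=
    hφ.continuousOn.mono (sphere_subset_closedBall.trans (closedBall_subset_ball hr1))
  have key : ∀ a m : ℕ, Real.circleAverage (fun z => ((2 * (φ z).re : ℝ) : ℂ) *
        (z ^ a * (starRingEnd ℂ) z ^ (a + m))) 0 r = r ^ (2 * a) * 
        (r ^ (2 * m) * (iteratedDeriv m φ 0 / m.factorial)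
        + if m = 0 then (starRingEnd ℂ) (φ 0) else 0) := by
    intro a m
    rw [← circleAverage_re_mul_conj_pow hφ hr0 hr1, ← smul_eq_mul, ← Real.circleAverage_fun_smul]
    refine Real.circleAverage_congr_sphere fun z hz => ?_
    have hz' : ‖z‖ = r := by simpa [abs_of_pos hr0] using hz
    have hzz : z * (starRingEnd ℂ) z = r ^ 2 := by
      rw [Complex.mul_conj, Complex.normSq_eq_norm_sq, hz']; simp
    simp only [smul_eq_mul, pow_mul, ← hzz]
    ring
  -- The case `k < j` is conjugate to the case `j < k`.
  rcases lt_trichotomy (j : ℕ) k with h | h | h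
  · obtain ⟨m, hm⟩ := Nat.exists_eq_add_of_lt h
    have hm' : (k : ℕ) = j + (m + 1) := by omega
    have hjk : j ≠ k := fun e => by simp [e] at h
    rw [if_neg hjk, if_pos h, max_eq_right h.le, hm', key, hc _ (by omega)]
    simp
    ring
  · have hjk : j = k := Fin.ext h
    subst hjk
    have := key j 0
    rw [hc 0 n.zero_le, hφ0, Complex.conj_eq_iff_im.mpr hc0] at this
    simp only [add_zero] at this
    rw [this]
    simp only [mul_zero, pow_zero, one_mul, if_true, max_self]
    ring
  · obtain ⟨m, hm⟩ := Nat.exists_eq_add_of_lt h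
    have hm' : (j : ℕ) = k + (m + 1) := by omega
    have hjk : j ≠ k := fun e => by simp [e] at h
    have h1 : CircleIntegrable (fun z => ((2 * (φ z).re : ℝ) : ℂ) *
        (z ^ (k : ℕ) * (starRingEnd ℂ) z ^ (j : ℕ))) 0 r := by
      refine ContinuousOn.circleIntegrable hr0.le ?_
      have := Complex.continuous_re.comp_continuousOn hcont
      simp only [Function.comp_def] at this
      fun_prop
    have h2 := circleAverage_conj h1
    rw [if_neg hjk, if_neg h.not_gt, max_eq_left h.le]
    simp only [map_mul, map_pow, Complex.conj_ofReal, Complex.conj_conj] at h2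
    simp only [mul_comm ((starRingEnd ℂ) _ ^ (k : ℕ))] at h2
    rw [h2, hm', key, hc _ (by omega)]
    simp
    ring

/-- The quadratic form of the Toeplitz matrix is the limit, as `r → 1`, of the circle averages of
`2 Re φ(z) |∑ x k (conj z) ^ k|² ≥ 0` over `|z| = r`. -/
theorem posSemidef_of_extension {φ : ℂ → ℂ} (hφ : DifferentiableOn ℂ φ (ball 0 1))
    (hre : ∀ z ∈ ball (0 : ℂ) 1, 0 ≤ (φ z).re) {n : ℕ} {c : ℕ → ℂ} (hc0 : (c 0).im = 0)
    (hc : ∀ j ≤ n, iteratedDeriv j φ 0 / (Nat.factorial j : ℂ) = c j) :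
    (Matrix.of fun j k : Fin (n + 1) =>
        if j = k then 2 * c 0
        else if (j : ℕ) < (k : ℕ) then c ((k : ℕ) - (j : ℕ))
        else (starRingEnd ℂ) (c ((j : ℕ) - (k : ℕ)))).PosSemidef := by
  set A : Matrix (Fin (n + 1)) (Fin (n + 1)) ℂ := Matrix.of fun j k : Fin (n + 1) =>
        if j = k then 2 * c 0
        else if (j : ℕ) < (k : ℕ) then c ((k : ℕ) - (j : ℕ))
        else (starRingEnd ℂ) (c ((j : ℕ) - (k : ℕ))) with hA
  refine Matrix.PosSemidef.of_dotProduct_mulVec_nonneg ?_ fun x => ?_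
  · ext j k
    simp only [hA, Matrix.conjTranspose_apply, Matrix.of_apply]
    rcases lt_trichotomy (j : ℕ) k with h | h | h
    · simp [h, h.not_gt, Fin.ext_iff, h.ne, h.ne']
    · obtain rfl := Fin.ext h
      simp [Complex.conj_eq_iff_im.mpr hc0]
    · simp [h, h.not_gt, Fin.ext_iff, h.ne, h.ne']
  · have hexp : star x ⬝ᵥ (A.mulVec x) = ∑ j, ∑ k, star (x j) * x k * A j k := by
      simp only [dotProduct, Matrix.mulVec, Finset.mul_sum, Pi.star_apply]
      exact Finset.sum_congr rfl fun j _ => Finset.sum_congr rfl fun k _ => by ring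
    rw [hexp]
    let F : ℝ → ℂ := fun r => ∑ j : Fin (n + 1), ∑ k : Fin (n + 1),
      star (x j) * x k * (r ^ (2 * max (j : ℕ) k) * A j k)
    have hF1 : F 1 = ∑ j, ∑ k, star (x j) * x k * A j k := by simp [F]
    have hFc : Continuous F := by fun_prop
    have hFnn : ∀ r ∈ Set.Ioo (0 : ℝ) 1, 0 ≤ F r := by
      rintro r ⟨hr0, hr1⟩
      have hcont : ContinuousOn φ (sphere 0 r) :=
        hφ.continuousOn.mono (sphere_subset_closedBall.trans (closedBall_subset_ball hr1))
      have hcre : ContinuousOn (fun z => (φ z).re) (sphere 0 r) :=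
        Complex.continuous_re.comp_continuousOn hcont
      let q : ℂ → ℂ := fun z => ∑ k : Fin (n + 1), x k * (starRingEnd ℂ) z ^ (k : ℕ)
      have hq : Continuous q := by fun_prop
      have hFr : F r = Real.circleAverage
          (fun z => ((2 * (φ z).re * ‖q z‖ ^ 2 : ℝ) : ℂ)) 0 r := by
        have : (fun z => ((2 * (φ z).re * ‖q z‖ ^ 2 : ℝ) : ℂ)) = fun z =>
            ∑ j : Fin (n + 1), ∑ k : Fin (n + 1), (star (x j) * x k) •
              (((2 * (φ z).re : ℝ) : ℂ) * (z ^ (j : ℕ) * (starRingEnd ℂ) z ^ (k : ℕ))) := by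
          ext z
          have : ((‖q z‖ ^ 2 : ℝ) : ℂ) = (starRingEnd ℂ) (q z) * q z := by
            rw [mul_comm, Complex.mul_conj, Complex.normSq_eq_norm_sq]
          rw [Complex.ofReal_mul, this]
          simp only [q, map_sum]
          rw [Finset.sum_mul_sum]
          simp only [Finset.mul_sum, map_mul, map_pow,
            Complex.conj_conj, smul_eq_mul]
          exact Finset.sum_congr rfl fun j _ => Finset.sum_congr rfl fun k _ => by
            simp only [RCLike.star_def]; ring
        rw [this, Real.circleAverage_fun_sum fun j _ =>
          ContinuousOn.circleIntegrable hr0.le (by fun_prop)]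
        refine Finset.sum_congr rfl fun j _ => ?_
        rw [Real.circleAverage_fun_sum fun k _ =>
          ContinuousOn.circleIntegrable hr0.le (by fun_prop)]
        refine Finset.sum_congr rfl fun k _ => ?_
        rw [Real.circleAverage_fun_smul, moment_eq hφ hr0 hr1 hc0 hc, smul_eq_mul]
        rfl
      have hint : CircleIntegrable (fun z => 2 * (φ z).re * ‖q z‖ ^ 2) 0 r :=
        ContinuousOn.circleIntegrable hr0.le (by fun_prop)
      have := ContinuousLinearMap.circleAverage_comp_comm Complex.ofRealCLM hint
      rw [hFr]
      have hnn : 0 ≤ Real.circleAverage (fun z => 2 * (φ z).re * ‖q z‖ ^ 2) 0 r := by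
        refine Real.circleAverage_nonneg_of_nonneg fun z hz => ?_
        have hz' : ‖z‖ = r := by simpa [abs_of_pos hr0] using hz
        have := hre z (by simpa [hz'] using hr1)
        positivity
      exact this.symm ▸ Complex.zero_le_real.mpr hnn
    rw [← hF1]
    have hcl : IsClosed {r : ℝ | 0 ≤ F r} := by
      exact isClosed_le continuous_const hFc
    have : (1 : ℝ) ∈ closure (Set.Ioo (0 : ℝ) 1) := by
      rw [closure_Ioo zero_ne_one]; simp
    exact closure_minimal hFnn hcl this

end Necessity

/-- **Carathéodory–Toeplitz theorem.** Given `c_0 ∈ ℝ` and `c_1, …, c_n ∈ ℂ` (with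
`c_{-k} = conj c_k`), there is an analytic function `φ` on the unit disk with
`Re φ ≥ 0` whose first `n+1` Taylor coefficients at `0` are `c_0, …, c_n` if and only if
the `(n+1)×(n+1)` Hermitian Toeplitz matrix with entries `c_{k-j}` off the diagonal and
`2c_0` on the diagonal is positive semidefinite. -/
theorem caratheodory_toeplitz (n : ℕ) (c : ℕ → ℂ) (hc0 : (c 0).im = 0) :
    (∃ φ : ℂ → ℂ, DifferentiableOn ℂ φ (Metric.ball 0 1) ∧
        (∀ z ∈ Metric.ball (0 : ℂ) 1, 0 ≤ (φ z).re) ∧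
        (∀ j ≤ n, iteratedDeriv j φ 0 / (Nat.factorial j : ℂ) = c j)) ↔
    (Matrix.of fun j k : Fin (n + 1) =>
        if j = k then 2 * c 0
        else if (j : ℕ) < (k : ℕ) then c ((k : ℕ) - (j : ℕ))
        else (starRingEnd ℂ) (c ((j : ℕ) - (k : ℕ)))).PosSemidef := by
  refine ⟨fun ⟨φ, hφ, hre, hc⟩ => posSemidef_of_extension hφ hre hc0 hc, fun hA => ?_⟩
  obtain ⟨m, u, hu⟩ := exists_gram_vectors hA
  simp only [Matrix.of_apply] at hu
  obtain ⟨U, hU⟩ := exists_shift_isometry u fun j k => by simp [hu]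
  have hpow : ∀ k (hk : k < n + 1), (U ^ k) (u 0) = u ⟨k, hk⟩ := by
    intro k
    induction k with
    | zero => intro _; rfl
    | succ k ih =>
      intro hk
      rw [pow_succ']
      change U ((U ^ k) (u 0)) = _
      rw [ih (by omega)]
      exact hU ⟨k, by omega⟩
  let a : ℕ → ℂ := fun k => if k = 0 then c 0 else inner ℂ (u 0) ((U ^ k) (u 0))
  have ha : ∀ k, 0 < k → a k = inner ℂ (u 0) ((U ^ k) (u 0)) := fun k hk => if_neg hk.ne'
  have hbound : ∀ k, ‖a k‖ ≤ ‖c 0‖ + ‖u 0‖ * ‖u 0‖ := by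
    intro k
    rcases Nat.eq_zero_or_pos k with rfl | hk
    · simpa [a] using mul_self_nonneg ‖u 0‖
    · have h := norm_inner_le_norm (𝕜 := ℂ) (u 0) ((U ^ k) (u 0))
      rw [(U ^ k).norm_map] at h
      rw [ha k hk]
      exact h.trans (le_add_of_nonneg_left (norm_nonneg _))
  obtain ⟨φ, hφ, hsum, hcoeff⟩ := exists_analytic_of_bounded_coeff a _ hbound
  have ha0 : 2 * a 0 = inner ℂ (u 0) (u 0) := by rw [hu]; simp [a]
  refine ⟨φ, hφ, fun z hz => re_nonneg_of_isometry U (u 0) a ha0 ha (by simpa using hz) (hsum z hz),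
    fun j hj => ?_⟩
  rw [hcoeff]
  rcases Nat.eq_zero_or_pos j with rfl | hj0
  · rfl
  · rw [ha j hj0, hpow j (by omega), hu]
    simp [Fin.ext_iff, hj0, hj0.ne]
end

section
/- Moment identity for traces of powers on the unitary group (Diaconis–Shahshahani, used by Bump–Diaconis): Equip the unitary group U(n) with normalized Haar measure dg, and for a k-tuple t = (t_1, …, t_k) of nonnegative integers set T_t(g) = ∏_{j=1}^{k} (tr(g^j))^{t_j}. If t = (t_1,…,t_k) and s = (s_1,…,s_k) are k-tuples of nonnegative integers with ∑_{j=1}^{k} j·t_j ≤ n and ∑_{j=1}^{k} j·s_j ≤ n, then ∫_{U(n)} conj(T_t(g))·T_s(g) dg = δ_{ts}·W(t), where δ_{ts} = 1 if t = s and 0 otherwise, and W(t) = ∏_{j=1}^{k} j^{t_j}·t_j!. -/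
/-!
Write `N = ∑ j s_j` and let `σ ∈ S_N` have `s_j` cycles of length `j`. Then `T_s(g)` is the trace of
`g^{⊗N}` composed with the permutation `σ` of the tensor factors (`exists_perm`), a sum over
multi-indices which is `permTrace g σ`. Take `τ` likewise for `t`. If the degrees of `T_t` and `T_s`
differ, invariance under a scalar `w` of large finite order kills the integral
(`integral_permTrace_eq_zero`).

If both degrees equal `N`, the integral is a contraction of the correlations
`∫ (g^{⊗N})_{ik} conj (g^{⊗N})_{jl} dg`. By invariance of the measure, for fixed `k, l` these form a
matrix in `(i, j)` commuting with every `g^{⊗N}`, `g ∈ U(n)` (`corr_commute`). For `N ≤ n` such a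
matrix is a combination of permutations of the tensor factors, with coefficients read off from its
column at `e = e_1 ⊗ ⋯ ⊗ e_N` (`commutant_eq`). Indeed it commutes with the torus, so it preserves
weight spaces and sends `e` to a combination of rearrangements of `e`; subtracting the corresponding
combination of permutations leaves a matrix killing `e`. It commutes with `M^{⊗N}` for all
matrices `M`, not only the unitary ones (`commute_kpow`: singular values for invertible `M`, then a
limit), and every basis tensor is `M^{⊗N} e` for some `M`, so it vanishes.

Substituting this expansion and using `g g* = 1` (`sum_corr`), the integral becomes the number of
`π ∈ S_N` with `τ π = π σ` (`integral_permTrace`). It is zero when the cycle types differ, and the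
order `∏ j^{t_j} t_j!` of the centralizer of `τ` when `t = s` (`card_centralizer_parts`).
-/

open MeasureTheory Filter Topology

noncomputable instance (n : ℕ) : MeasurableSpace (Matrix.unitaryGroup (Fin n) ℂ) :=
  borel _


/-! ### Kronecker powers -/

/-- The matrix of `M^{⊗N}` acting on `(ℂⁿ)^{⊗N}`, in the basis of elementary tensors
`e_{i 0} ⊗ ⋯ ⊗ e_{i (N-1)}` indexed by the functions `i : Fin N → Fin n`. -/
def kpow {n : ℕ} (N : ℕ) (M : Matrix (Fin n) (Fin n) ℂ) :
    Matrix (Fin N → Fin n) (Fin N → Fin n) ℂ :=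
  Matrix.of fun i j => ∏ k, M (i k) (j k)

lemma kpow_apply {n N : ℕ} (M : Matrix (Fin n) (Fin n) ℂ) (i j : Fin N → Fin n) :
    kpow N M i j = ∏ k, M (i k) (j k) := rfl

lemma kpow_mul {n N : ℕ} (A B : Matrix (Fin n) (Fin n) ℂ) :
    kpow N (A * B) = kpow N A * kpow N B := by
  ext i j
  simp only [kpow_apply, Matrix.mul_apply, Fintype.prod_sum, Finset.prod_mul_distrib]

lemma kpow_diagonal {n N : ℕ} (z : Fin n → ℂ) :
    kpow N (Matrix.diagonal z) = Matrix.diagonal fun i : Fin N → Fin n => ∏ k, z (i k) := by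
  ext i j
  by_cases h : i = j
  · subst h; simp [kpow_apply]
  · obtain ⟨k, hk⟩ := Function.ne_iff.mp h
    rw [kpow_apply, Matrix.diagonal_apply_ne _ h]
    exact Finset.prod_eq_zero (Finset.mem_univ k) (Matrix.diagonal_apply_ne _ hk)

lemma kpow_one {n N : ℕ} : kpow N (1 : Matrix (Fin n) (Fin n) ℂ) = 1 := by
  rw [← Matrix.diagonal_one, kpow_diagonal]; simp

lemma kpow_star {n N : ℕ} (M : Matrix (Fin n) (Fin n) ℂ) :
    kpow N (star M) = star (kpow N M) := by
  ext i j
  simp [kpow_apply, Matrix.star_apply]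

lemma continuous_kpow {n N : ℕ} : Continuous (kpow (n := n) N) := by
  refine continuous_matrix fun i j => ?_
  simp only [kpow_apply]
  fun_prop

/-! ### The commutant of the unitary group -/

lemma exists_perm_of_fiber_card {n N : ℕ} (i j : Fin N → Fin n)
    (h : ∀ m, (Finset.univ.filter fun k => i k = m).card =
      (Finset.univ.filter fun k => j k = m).card) :
    ∃ π : Equiv.Perm (Fin N), i = j ∘ π := by
  have e : ∀ m, Nonempty ({a // i a = m} ≃ {b // j b = m}) := fun m => by
    refine Fintype.card_eq.mp ?_
    rw [Fintype.card_subtype, Fintype.card_subtype, h m]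
  have e := fun m => (e m).some
  exact ⟨Equiv.ofFiberEquiv e, funext fun a => (Equiv.ofFiberEquiv_map e a).symm⟩

lemma diagonal_mem_unitary {n : ℕ} (z : Fin n → ℂ) (hz : ∀ a, ‖z a‖ = 1) :
    Matrix.diagonal z ∈ Matrix.unitaryGroup (Fin n) ℂ := by
  rw [Matrix.mem_unitaryGroup_iff, Matrix.star_eq_conjTranspose, Matrix.diagonal_conjTranspose,
    Matrix.diagonal_mul_diagonal, ← Matrix.diagonal_one]
  congr 1
  ext a
  simp [Complex.mul_conj, Complex.normSq_eq_norm_sq, hz]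

/-- Commuting with the diagonal torus preserves weight spaces: a nonzero entry can only link
multi-indices that are rearrangements of one another. -/
lemma exists_perm_of_commute {n N : ℕ} {A : Matrix (Fin N → Fin n) (Fin N → Fin n) ℂ}
    (hA : ∀ g ∈ Matrix.unitaryGroup (Fin n) ℂ, Commute A (kpow N g))
    {i j : Fin N → Fin n} (hij : A i j ≠ 0) : ∃ π : Equiv.Perm (Fin N), i = j ∘ π := by
  refine exists_perm_of_fiber_card i j fun m => ?_
  -- A root of unity of order `N + 1` in position `m` detects the multiplicity of `m`, at most `N`.
  set w : ℂ := Complex.exp (2 * Real.pi * Complex.I / (N + 1 : ℕ)) with hw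
  have hp : IsPrimitiveRoot w (N + 1) := Complex.isPrimitiveRoot_exp _ (by omega)
  have hn : ‖w‖ = 1 := hp.norm'_eq_one (by omega)
  have key (i : Fin N → Fin n) : ∏ k, (if i k = m then w else 1) =
      w ^ (Finset.univ.filter fun k => i k = m).card := by
    rw [Finset.prod_ite]; simp
  have h := hA _ (diagonal_mem_unitary (fun a => if a = m then w else 1)
    fun a => by split_ifs <;> simp [hn])
  rw [kpow_diagonal] at h
  have h' := congrFun (congrFun h i) j
  simp only [Matrix.mul_diagonal, Matrix.diagonal_mul, key] at h'
  rw [mul_comm] at h'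
  have hlt (i : Fin N → Fin n) : (Finset.univ.filter fun k => i k = m).card < N + 1 :=
    Nat.lt_succ_of_le ((Finset.card_le_univ _).trans (by simp))
  exact hp.pow_inj (hlt i) (hlt j) (mul_right_cancel₀ hij h').symm

/-- Weight spaces are also the eigenspaces of the complex torus, so unimodularity of the diagonal
entries can be dropped. -/
lemma commute_diagonal {n N : ℕ} {A : Matrix (Fin N → Fin n) (Fin N → Fin n) ℂ}
    (hA : ∀ g ∈ Matrix.unitaryGroup (Fin n) ℂ, Commute A (kpow N g)) (z : Fin n → ℂ) :
    Commute A (kpow N (Matrix.diagonal z)) := by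
  rw [kpow_diagonal]
  ext i j
  rw [Matrix.mul_diagonal, Matrix.diagonal_mul]
  by_cases hij : A i j = 0
  · simp [hij]
  · obtain ⟨π, rfl⟩ := exists_perm_of_commute hA hij
    rw [mul_comm]
    congr 1
    exact (Equiv.prod_comp π fun k => z (j k)).symm

open scoped ComplexOrder in
/-- Singular value decomposition of an invertible matrix: `V*` diagonalizes `M* M`, and
`z` consists of the square roots of its (positive) eigenvalues. -/
lemma exists_svd {n : ℕ} (M : Matrix (Fin n) (Fin n) ℂ) (hM : M.det ≠ 0) :
    ∃ U ∈ Matrix.unitaryGroup (Fin n) ℂ, ∃ V ∈ Matrix.unitaryGroup (Fin n) ℂ,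
      ∃ z : Fin n → ℂ, M = U * Matrix.diagonal z * V := by
  have hH := Matrix.isHermitian_conjTranspose_mul_self M
  have hpd : (M.conjTranspose * M).PosDef := by
    apply Matrix.PosDef.conjTranspose_mul_self
    exact Matrix.mulVec_injective_of_isUnit ((Matrix.isUnit_iff_isUnit_det _).2 hM.isUnit)
  have hpos : ∀ a, 0 < hH.eigenvalues a := hpd.eigenvalues_pos
  set V : Matrix (Fin n) (Fin n) ℂ :=
    (hH.eigenvectorUnitary : Matrix (Fin n) (Fin n) ℂ) with hV
  have hVm : V ∈ Matrix.unitaryGroup (Fin n) ℂ := hH.eigenvectorUnitary.2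
  have hspec := hH.conjStarAlgAut_star_eigenvectorUnitary
  rw [Unitary.conjStarAlgAut_star_apply] at hspec
  have hV1 : V * star V = 1 := Matrix.mem_unitaryGroup_iff.1 hVm
  set r : Fin n → ℂ := fun a => ((Real.sqrt (hH.eigenvalues a) : ℝ) : ℂ) with hr
  have hr0 : ∀ a, r a ≠ 0 := fun a => by
    simp only [hr, ne_eq, Complex.ofReal_eq_zero]
    exact (Real.sqrt_pos.2 (hpos a)).ne'
  have hdd : Matrix.diagonal (fun a => (r a)⁻¹) * Matrix.diagonal r = 1 := by
    rw [Matrix.diagonal_mul_diagonal, ← Matrix.diagonal_one]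
    congr 1; ext a; simp [hr0 a]
  refine ⟨M * V * Matrix.diagonal (fun a => (r a)⁻¹), ?_, star V, ?_, r, ?_⟩
  · rw [Matrix.mem_unitaryGroup_iff']
    have : star (M * V * Matrix.diagonal (fun a => (r a)⁻¹)) *
        (M * V * Matrix.diagonal (fun a => (r a)⁻¹)) =
        star (Matrix.diagonal (fun a => (r a)⁻¹)) * (star V * (M.conjTranspose * M) * V) *
          Matrix.diagonal (fun a => (r a)⁻¹) := by
      simp only [star_mul, Matrix.mul_assoc, Matrix.star_eq_conjTranspose]
    rw [this, hspec, Matrix.star_eq_conjTranspose, Matrix.diagonal_conjTranspose,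
      Matrix.diagonal_mul_diagonal, Matrix.diagonal_mul_diagonal, ← Matrix.diagonal_one]
    congr 1; ext a
    have h2 : ((hH.eigenvalues a : ℝ) : ℂ) = r a * r a := by
      simp only [hr]; rw [← Complex.ofReal_mul, Real.mul_self_sqrt (hpos a).le]
    have h3 : star (r a) = r a := by simp [hr]
    simp only [Pi.star_apply, Function.comp_apply, star_inv₀, h3]
    have h4 : (RCLike.ofReal (hH.eigenvalues a) : ℂ) = r a * r a := h2
    rw [h4]; field_simp [hr0 a]
  · exact Unitary.star_mem hVm
  · calc M = M * (V * star V) := by rw [hV1, mul_one]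
      _ = M * V * (Matrix.diagonal (fun a => (r a)⁻¹) * Matrix.diagonal r) * star V := by
          rw [hdd, mul_one, mul_assoc]
      _ = _ := by simp only [mul_assoc]

/-- Zariski density of `U(n)` in the matrices, in the form needed here. -/
lemma commute_kpow {n N : ℕ} {A : Matrix (Fin N → Fin n) (Fin N → Fin n) ℂ}
    (hA : ∀ g ∈ Matrix.unitaryGroup (Fin n) ℂ, Commute A (kpow N g))
    (M : Matrix (Fin n) (Fin n) ℂ) : Commute A (kpow N M) := by
  have hinv : ∀ M : Matrix (Fin n) (Fin n) ℂ, M.det ≠ 0 → Commute A (kpow N M) := by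
    intro M hM
    obtain ⟨U, hU, V, hV, z, rfl⟩ := exists_svd M hM
    rw [kpow_mul, kpow_mul]
    exact ((hA U hU).mul_right (commute_diagonal hA z)).mul_right (hA V hV)
  -- `x - M` is invertible off the finitely many eigenvalues `x` of `M`; let `x → 0`.
  have hev : ∀ᶠ x : ℂ in 𝓝[≠] 0, Commute A (kpow N (Matrix.scalar (Fin n) x - M)) := by
    have h0 : M.charpoly ≠ 0 := M.charpoly_monic.ne_zero
    have hfin : {x | M.charpoly.IsRoot x}.Finite := Polynomial.finite_setOfPred_isRoot h0
    have : ∀ᶠ x : ℂ in 𝓝[≠] 0, x ∉ {x | M.charpoly.IsRoot x} := by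
      have h1 := (hfin.subset (Set.sdiff_subset (t := {0}))).isClosed.isOpen_compl.mem_nhds
        (x := (0:ℂ)) (by simp)
      filter_upwards [mem_nhdsWithin_of_mem_nhds h1, self_mem_nhdsWithin] with x hx hx0 hx1
      exact hx ⟨hx1, hx0⟩
    filter_upwards [this] with x hx
    apply hinv
    rwa [← Matrix.eval_charpoly]
  have hc : Continuous fun x : ℂ => kpow N (Matrix.scalar (Fin n) x - M) := by
    refine continuous_kpow.comp (Continuous.sub ?_ continuous_const)
    refine continuous_matrix fun i j => ?_
    by_cases h : i = j <;> simp [Matrix.scalar_apply, h] <;> fun_prop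
  have hcl : IsClosed {x : ℂ | Commute A (kpow N (Matrix.scalar (Fin n) x - M))} :=
    isClosed_eq (continuous_const.mul hc) (hc.mul continuous_const)
  have h0 : Commute A (kpow N (Matrix.scalar (Fin n) 0 - M)) :=
    hcl.mem_of_frequently_of_tendsto hev.frequently nhdsWithin_le_nhds
  have hm : M = (Matrix.diagonal fun _ => (-1 : ℂ)) * (Matrix.scalar (Fin n) 0 - M) := by
    ext i j; simp
  rw [hm, kpow_mul]
  exact (commute_diagonal hA _).mul_right h0

/-- First fundamental theorem for `U(n)` in the stable range `N ≤ n`: the matrix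
`(i, j) ↦ if i = j ∘ π then 1 else 0` is the action of `π` on the tensor factors, and a matrix
commuting with all `g^{⊗N}` is the combination of these that has the same column at the
injective multi-index `e = Fin.castLE hN`. -/
lemma commutant_eq {n N : ℕ} (hN : N ≤ n) {A : Matrix (Fin N → Fin n) (Fin N → Fin n) ℂ}
    (hA : ∀ g ∈ Matrix.unitaryGroup (Fin n) ℂ, Commute A (kpow N g)) (i j : Fin N → Fin n) :
    A i j = ∑ π : Equiv.Perm (Fin N),
      A (Fin.castLE hN ∘ π) (Fin.castLE hN) * if i = j ∘ π then 1 else 0 := by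
  set e : Fin N → Fin n := Fin.castLE hN with he
  have hinj : Function.Injective e := Fin.castLE_injective hN
  set B : Matrix (Fin N → Fin n) (Fin N → Fin n) ℂ :=
    Matrix.of fun i j => ∑ π : Equiv.Perm (Fin N), A (e ∘ π) e * if i = j ∘ π then 1 else 0
    with hB
  have hBe : ∀ i, A i e = B i e := by
    intro i
    by_cases h : A i e = 0
    · rw [h, hB, Matrix.of_apply, Finset.sum_eq_zero]
      intro π _
      split_ifs with h1
      · rw [← h1, h, zero_mul]
      · simp
    · obtain ⟨σ, rfl⟩ := exists_perm_of_commute hA h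
      rw [hB, Matrix.of_apply, Finset.sum_eq_single σ]
      · simp
      · intro π _ hne
        rw [if_neg, mul_zero]
        intro h1
        exact hne (Equiv.ext fun k => (hinj (congrFun h1 k)).symm)
      · simp
  -- `M` sends the basis vector `e k` to the basis vector `j k`.
  set M : Matrix (Fin n) (Fin n) ℂ :=
    Matrix.of fun a b => if ∃ k, e k = b ∧ a = j k then 1 else 0 with hM
  have hKM : ∀ l, kpow N M l e = if l = j then 1 else 0 := by
    intro l
    have : ∀ k, M (l k) (e k) = if l k = j k then 1 else 0 := by
      intro k
      simp only [hM, Matrix.of_apply]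
      congr 1
      simp only [eq_iff_iff]
      constructor
      · rintro ⟨k', h1, h2⟩; rw [hinj h1] at h2; exact h2
      · exact fun h => ⟨k, rfl, h⟩
    simp only [kpow_apply, this]
    rw [Finset.prod_ite_zero]
    simp [funext_iff]
  have hcol : ∀ C : Matrix (Fin N → Fin n) (Fin N → Fin n) ℂ, (C * kpow N M) i e = C i j := by
    intro C
    simp [Matrix.mul_apply, hKM]
  have hBc : Commute B (kpow N M) := by
    ext i j
    simp only [hB, Matrix.mul_apply, Matrix.of_apply, Finset.sum_mul, Finset.mul_sum]
    rw [Finset.sum_comm, Finset.sum_comm (s := Finset.univ (α := Fin N → Fin n))]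
    refine Finset.sum_congr rfl fun π _ => ?_
    have h1 : ∀ l : Fin N → Fin n, (i = l ∘ π) ↔ (l = i ∘ π.symm) := fun l => by
      rw [eq_comm]; exact (Equiv.eq_comp_symm π l i).symm
    simp only [mul_ite, mul_one, mul_zero, ite_mul, zero_mul, h1, Finset.sum_ite_eq',
      Finset.mem_univ, if_true]
    rw [mul_comm]
    congr 1
    simp only [kpow_apply]
    rw [← Equiv.prod_comp π]
    simp
  calc A i j = (A * kpow N M) i e := (hcol A).symm
    _ = (kpow N M * A) i e := by rw [(commute_kpow hA M).eq]
    _ = (kpow N M * B) i e := by simp only [Matrix.mul_apply, hBe]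
    _ = (B * kpow N M) i e := by rw [hBc.eq]
    _ = B i j := hcol B

/-! ### Traces of permuted tensor powers -/

/-- The trace of `M^{⊗X}` composed with the permutation of the tensor factors induced by `σ`,
written as a sum over multi-indices. -/
def permTrace {n : ℕ} {X : Type*} [Fintype X] [DecidableEq X] (M : Matrix (Fin n) (Fin n) ℂ)
    (σ : Equiv.Perm X) : ℂ :=
  ∑ i : X → Fin n, ∏ k, M (i k) (i (σ k))

lemma permTrace_permCongr {n : ℕ} {X Y : Type*} [Fintype X] [DecidableEq X] [Fintype Y]
    [DecidableEq Y] (M : Matrix (Fin n) (Fin n) ℂ) (e : X ≃ Y) (σ : Equiv.Perm X) :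
    permTrace M (e.permCongr σ) = permTrace M σ := by
  unfold permTrace
  rw [← Equiv.sum_comp (e.arrowCongr (Equiv.refl (Fin n)))]
  refine Finset.sum_congr rfl fun i _ => ?_
  rw [← Equiv.prod_comp e]
  simp [Equiv.arrowCongr]

lemma permTrace_sumCongr {n : ℕ} {X Y : Type*} [Fintype X] [DecidableEq X] [Fintype Y]
    [DecidableEq Y] (M : Matrix (Fin n) (Fin n) ℂ) (σ : Equiv.Perm X) (τ : Equiv.Perm Y) :
    permTrace M (Equiv.Perm.sumCongr σ τ) = permTrace M σ * permTrace M τ := by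
  unfold permTrace
  rw [← Equiv.sum_comp (Equiv.sumArrowEquivProdArrow X Y (Fin n)).symm, Fintype.sum_prod_type,
    Finset.sum_mul_sum]
  simp [Fintype.prod_sum_type]

/-- Entries of a matrix power as sums over walks from `a` to `b`; the interior vertices are `i`. -/
lemma pow_apply_eq_sum {n : ℕ} (M : Matrix (Fin n) (Fin n) ℂ) (m : ℕ) (a b : Fin n) :
    (M ^ (m + 1)) a b = ∑ i : Fin m → Fin n,
      ∏ k : Fin (m + 1), M ((Fin.cons a i : Fin (m + 1) → Fin n) k)
        ((Fin.snoc i b : Fin (m + 1) → Fin n) k) := by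
  induction m generalizing a with
  | zero => simp [Fin.snoc]
  | succ m ih =>
    rw [pow_succ', Matrix.mul_apply, ← Equiv.sum_comp (Fin.consEquiv fun _ => Fin n),
      Fintype.sum_prod_type]
    refine Finset.sum_congr rfl fun c _ => ?_
    rw [ih, Finset.mul_sum]
    refine Finset.sum_congr rfl fun i _ => ?_
    have hs : (Fin.snoc (Fin.cons c i : Fin (m + 1) → Fin n) b : Fin (m + 2) → Fin n) =
        Fin.cons c (Fin.snoc i b : Fin (m + 1) → Fin n) := (Fin.cons_snoc_eq_snoc_cons ..).symm
    rw [Fin.prod_univ_succ (n := m + 1)]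
    simp only [Fin.consEquiv, Equiv.coe_fn_mk, Fin.cons_zero, Fin.cons_succ]
    rw [hs]
    simp only [Fin.cons_zero, Fin.cons_succ]

/-- A single cycle of length `m` contributes `tr (M ^ m)`. -/
lemma permTrace_finRotate {n : ℕ} (M : Matrix (Fin n) (Fin n) ℂ) {m : ℕ} (hm : 0 < m) :
    permTrace M (finRotate m) = Matrix.trace (M ^ m) := by
  obtain ⟨m, rfl⟩ : ∃ p, m = p + 1 := ⟨m - 1, by omega⟩
  unfold permTrace Matrix.trace
  rw [← Equiv.sum_comp (Fin.consEquiv fun _ => Fin n), Fintype.sum_prod_type]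
  refine Finset.sum_congr rfl fun a _ => ?_
  rw [Matrix.diag_apply, pow_apply_eq_sum]
  refine Finset.sum_congr rfl fun i _ => Finset.prod_congr rfl fun k _ => ?_
  congr 1
  refine Fin.lastCases ?_ (fun k => ?_) k
  · simp [Fin.consEquiv]
  · have h : finRotate (m + 1) k.castSucc = k.succ := by
      rw [finRotate_apply, Fin.coeSucc_eq_succ]
    simp [Fin.consEquiv, h]

lemma cycleType_sumCongr {X Y : Type*} [Fintype X] [DecidableEq X] [Fintype Y]
    [DecidableEq Y] (σ : Equiv.Perm X) (τ : Equiv.Perm Y) :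
    (Equiv.Perm.sumCongr σ τ).cycleType = σ.cycleType + τ.cycleType := by
  classical
  have h1 : (Equiv.Perm.sumCongr σ (1 : Equiv.Perm Y)) =
      σ.extendDomain (Equiv.ofInjective (Sum.inl : X → X ⊕ Y) Sum.inl_injective) := by
    ext x
    rcases x with x | y
    · have := Equiv.Perm.extendDomain_apply_image σ
        (Equiv.ofInjective (Sum.inl : X → X ⊕ Y) Sum.inl_injective) x
      simpa using this.symm
    · rw [Equiv.Perm.extendDomain_apply_not_subtype _ _ (by simp)]; simp
  have h2 : (Equiv.Perm.sumCongr (1 : Equiv.Perm X) τ) =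
      τ.extendDomain (Equiv.ofInjective (Sum.inr : Y → X ⊕ Y) Sum.inr_injective) := by
    ext x
    rcases x with x | y
    · rw [Equiv.Perm.extendDomain_apply_not_subtype _ _ (by simp)]; simp
    · have := Equiv.Perm.extendDomain_apply_image τ
        (Equiv.ofInjective (Sum.inr : Y → X ⊕ Y) Sum.inr_injective) y
      simpa using this.symm
  have h3 : Equiv.Perm.sumCongr σ τ =
      Equiv.Perm.sumCongr σ (1 : Equiv.Perm Y) * Equiv.Perm.sumCongr (1 : Equiv.Perm X) τ := by
    rw [Equiv.Perm.sumCongr_mul, mul_one, one_mul]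
  have hd : (Equiv.Perm.sumCongr σ (1 : Equiv.Perm Y)).Disjoint
      (Equiv.Perm.sumCongr (1 : Equiv.Perm X) τ) := by
    intro x
    rcases x with x | y
    · right; simp
    · left; simp
  rw [h3, hd.cycleType_mul, h1, h2, Equiv.Perm.cycleType_extendDomain,
    Equiv.Perm.cycleType_extendDomain]

lemma cycleType_permCongr {X Y : Type*} [Fintype X] [DecidableEq X] [Fintype Y]
    [DecidableEq Y] (e : X ≃ Y) (σ : Equiv.Perm X) :
    (e.permCongr σ).cycleType = σ.cycleType := by
  have : e.permCongr σ = σ.extendDomain (e.trans (Equiv.Set.univ Y).symm) := by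
    ext y
    obtain ⟨x, rfl⟩ := e.surjective y
    have := Equiv.Perm.extendDomain_apply_image σ (e.trans (Equiv.Set.univ Y).symm) x
    simpa using this.symm
  rw [this, Equiv.Perm.cycleType_extendDomain]

/-- A permutation with cycle lengths `l`, together with the power-sum expression of its trace.
Mathlib's `cycleType` does not record fixed points, hence the filter. The equality `l.sum = N` is
kept as a hypothesis so that two multisets with equal sums give permutations of the same type. -/
lemma exists_perm (l : Multiset ℕ) (hl : ∀ m ∈ l, 0 < m) : ∀ N, l.sum = N →
    ∃ σ : Equiv.Perm (Fin N), σ.cycleType = l.filter (fun m => m ≠ 1) ∧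
      ∀ (n : ℕ) (M : Matrix (Fin n) (Fin n) ℂ),
        permTrace M σ = (l.map fun m => Matrix.trace (M ^ m)).prod := by
  induction l using Multiset.induction with
  | empty =>
    rintro N rfl
    refine ⟨1, by rw [Equiv.Perm.cycleType_one]; rfl, fun n M => ?_⟩
    rw [Multiset.map_zero, Multiset.prod_zero]
    have : IsEmpty (Fin (Multiset.sum (0 : Multiset ℕ))) := by
      rw [Multiset.sum_zero]; infer_instance
    unfold permTrace
    rw [Fintype.sum_unique, Finset.prod_of_isEmpty]
  | cons m l ih =>
    rintro N rfl
    obtain ⟨σ, h1, h2⟩ := ih (fun a ha => hl a (Multiset.mem_cons_of_mem ha)) _ rfl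
    rw [Multiset.sum_cons]
    have hm := hl m (Multiset.mem_cons_self m l)
    refine ⟨finSumFinEquiv.permCongr (Equiv.Perm.sumCongr (finRotate m) σ), ?_, fun n M => ?_⟩
    · rw [cycleType_permCongr, cycleType_sumCongr, h1, Multiset.filter_cons]
      congr 1
      split_ifs with h
      · exact cycleType_finRotate_of_le (by omega)
      · simp only [not_not] at h
        subst h
        rw [Equiv.Perm.cycleType_eq_zero]
        exact Subsingleton.elim _ _
    · rw [permTrace_permCongr, permTrace_sumCongr, permTrace_finRotate M hm, h2,
        Multiset.map_cons, Multiset.prod_cons]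

/-! ### Cycle types and centralizers -/

/-- The partition `1^{t_1} 2^{t_2} ⋯ k^{t_k}`, as a multiset; `t` is indexed from `0`, so `t j` is
the multiplicity of the part `j + 1`. -/
def parts {k : ℕ} (t : Fin k → ℕ) : Multiset ℕ :=
  ∑ j : Fin k, Multiset.replicate (t j) ((j : ℕ) + 1)

lemma parts_pos {k : ℕ} (t : Fin k → ℕ) : ∀ m ∈ parts t, 0 < m := by
  intro m hm
  obtain ⟨j, _, hj⟩ := Multiset.mem_sum.1 hm
  rw [Multiset.eq_of_mem_replicate hj]; omega

lemma sum_parts {k : ℕ} (t : Fin k → ℕ) : (parts t).sum = ∑ j : Fin k, ((j : ℕ) + 1) * t j := by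
  simp [parts, Multiset.sum_sum, mul_comm]

lemma map_parts_prod {k : ℕ} {R : Type*} [CommMonoid R] (t : Fin k → ℕ) (f : ℕ → R) :
    ((parts t).map f).prod = ∏ j : Fin k, f ((j : ℕ) + 1) ^ t j := by
  rw [parts, ← Multiset.coe_mapAddMonoidHom, map_sum, Multiset.prod_sum]
  simp

lemma count_parts {k : ℕ} (t : Fin k → ℕ) (j : Fin k) : (parts t).count ((j : ℕ) + 1) = t j := by
  simp [parts, Multiset.count_sum', Multiset.count_replicate, Fin.val_inj]

lemma parts_injective {k : ℕ} : Function.Injective (parts (k := k)) := fun t s h =>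
  funext fun j => by rw [← count_parts t j, h, count_parts]

/-- A multiset of naturals is determined by its sum and its elements other than `1`; thus the
cycle type, which omits fixed points, still determines the partition. -/
lemma filter_ne_one_inj {l l' : Multiset ℕ} (hs : l.sum = l'.sum)
    (hf : l.filter (fun m => m ≠ 1) = l'.filter (fun m => m ≠ 1)) : l = l' := by
  have key (l : Multiset ℕ) : l = Multiset.replicate (l.count 1) 1 + l.filter (fun m => m ≠ 1) := by
    rw [← Multiset.filter_eq']
    exact (Multiset.filter_add_not _ _).symm
  have h1 := congrArg Multiset.sum (key l)
  have h2 := congrArg Multiset.sum (key l')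
  simp only [Multiset.sum_add, Multiset.sum_replicate, smul_eq_mul, mul_one] at h1 h2
  rw [key l, key l', hf, show l.count 1 = l'.count 1 by rw [hf] at h1; omega]

/-- Mathlib's centralizer formula treats the fixed points apart from the cycle type; here both are
merged into the usual `∏ j^{t_j} t_j!`. -/
lemma card_centralizer_parts {k N : ℕ} (t : Fin k → ℕ) (hN : (parts t).sum = N)
    (σ : Equiv.Perm (Fin N)) (hσ : σ.cycleType = (parts t).filter (fun m => m ≠ 1)) :
    Nat.card (Subgroup.centralizer {σ}) = ∏ j : Fin k, ((j : ℕ) + 1) ^ t j * (t j).factorial := by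
  set l := parts t with hl
  have key : l = Multiset.replicate (l.count 1) 1 + l.filter (fun m => m ≠ 1) := by
    rw [← Multiset.filter_eq']
    exact (Multiset.filter_add_not _ _).symm
  have h1 : N - (l.filter (fun m => m ≠ 1)).sum = l.count 1 := by
    have h := congrArg Multiset.sum key
    simp only [Multiset.sum_add, Multiset.sum_replicate, smul_eq_mul, mul_one] at h
    omega
  have h2 : (l.filter (fun m => m ≠ 1)).prod = ∏ j : Fin k, ((j : ℕ) + 1) ^ t j := by
    have h := congrArg Multiset.prod key
    simp only [Multiset.prod_add, Multiset.prod_replicate, one_pow, one_mul] at h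
    rw [← h, ← Multiset.map_id l, hl, map_parts_prod]; rfl
  have h3 : (l.count 1).factorial * ∏ m ∈ (l.filter (fun m => m ≠ 1)).toFinset,
      ((l.filter (fun m => m ≠ 1)).count m).factorial = ∏ j : Fin k, (t j).factorial := by
    have hr : ∏ j : Fin k, (t j).factorial =
        ∏ m ∈ Finset.univ.image (fun j : Fin k => (j : ℕ) + 1), (l.count m).factorial := by
      rw [Finset.prod_image (fun a _ b _ h => by simpa [Fin.val_inj] using h)]
      exact Finset.prod_congr rfl fun j _ => by rw [hl, count_parts]
    have hz : ∀ m, m ∉ l → (l.count m).factorial = 1 := fun m hm => by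
      rw [Multiset.count_eq_zero_of_notMem hm]; rfl
    have hi : ∏ m ∈ insert 1 l.toFinset, (l.count m).factorial =
        ∏ m ∈ l.toFinset, (l.count m).factorial :=
      (Finset.prod_subset (Finset.subset_insert _ _) fun m _ hm => hz m (by simpa using hm)).symm
    have hj : ∏ m ∈ l.toFinset, (l.count m).factorial =
        ∏ m ∈ Finset.univ.image (fun j : Fin k => (j : ℕ) + 1), (l.count m).factorial := by
      refine Finset.prod_subset (fun m hm => ?_) fun m _ hm => hz m (by simpa using hm)
      obtain ⟨j, _, hj⟩ := Multiset.mem_sum.1 (Multiset.mem_toFinset.1 hm)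
      rw [Multiset.eq_of_mem_replicate hj]
      exact Finset.mem_image_of_mem _ (Finset.mem_univ j)
    rw [hr, ← hj, ← hi, ← Finset.insert_erase (Finset.mem_insert_self 1 l.toFinset),
      Finset.prod_insert (Finset.notMem_erase _ _)]
    congr 1
    refine Finset.prod_congr ?_ fun m hm => ?_
    · ext m
      simp only [Multiset.mem_toFinset, Multiset.mem_filter, Finset.mem_erase, Finset.mem_insert]
      tauto
    · rw [Multiset.count_filter_of_pos (p := fun m => m ≠ 1)]
      exact (Finset.mem_erase.1 hm).1
  rw [Equiv.Perm.nat_card_centralizer, hσ, Fintype.card_fin, h1, h2, Finset.prod_mul_distrib, ← h3]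
  ring

/-! ### Integration over the unitary group -/

instance (n : ℕ) : BorelSpace (Matrix.unitaryGroup (Fin n) ℂ) := ⟨rfl⟩

lemma integrable_of_continuous {n : ℕ} (μ : Measure (Matrix.unitaryGroup (Fin n) ℂ))
    [IsProbabilityMeasure μ] {f : Matrix (Fin n) (Fin n) ℂ → ℂ} (hf : Continuous f) :
    Integrable (fun g : Matrix.unitaryGroup (Fin n) ℂ => f g) μ := by
  -- Unitary matrices have entries in the closed unit disc, on which `f` is bounded.
  have hK : IsCompact (Matrix.of '' Set.pi Set.univ fun _ : Fin n => Set.pi Set.univ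
      fun _ : Fin n => Metric.closedBall (0 : ℂ) 1) :=
    (isCompact_univ_pi fun _ => isCompact_univ_pi fun _ => isCompact_closedBall _ _).image
      continuous_id
  obtain ⟨C, hC⟩ := hK.exists_bound_of_continuousOn hf.continuousOn
  refine Integrable.of_bound (C := C)
    (hf.comp continuous_subtype_val).aestronglyMeasurable (ae_of_all _ fun g => hC _ ?_)
  refine ⟨(g : Matrix (Fin n) (Fin n) ℂ), ?_, rfl⟩
  exact fun i _ j _ => mem_closedBall_zero_iff.2 <| entry_norm_bound_of_unitary g.2 i j

lemma integral_mul_left {n : ℕ} {μ : Measure (Matrix.unitaryGroup (Fin n) ℂ)}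
    (hinv : ∀ g : Matrix.unitaryGroup (Fin n) ℂ, Measure.map (fun x => g * x) μ = μ)
    {f : Matrix (Fin n) (Fin n) ℂ → ℂ} (hf : Continuous f) (h : Matrix.unitaryGroup (Fin n) ℂ) :
    ∫ g : Matrix.unitaryGroup (Fin n) ℂ, f (h * g : Matrix (Fin n) (Fin n) ℂ) ∂μ =
      ∫ g : Matrix.unitaryGroup (Fin n) ℂ, f g ∂μ := by
  have hc : Continuous fun x : Matrix.unitaryGroup (Fin n) ℂ => h * x := by fun_prop
  have h1 := integral_map (μ := μ) hc.measurable.aemeasurable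
    (f := fun g : Matrix.unitaryGroup (Fin n) ℂ => f g)
    (hf.comp continuous_subtype_val).aestronglyMeasurable
  rw [hinv h] at h1
  exact h1.symm

/-- The correlation `∫ (g^{⊗N})_{ik} conj (g^{⊗N})_{jl} dg`. The column indices `k, l` come first:
for fixed `k, l` it is a matrix in `(i, j)`, namely the average `∫ g^{⊗N} E_{kl} (g^{⊗N})* dg`. -/
noncomputable def corr {n N : ℕ} (μ : Measure (Matrix.unitaryGroup (Fin n) ℂ))
    (k l i j : Fin N → Fin n) : ℂ :=
  ∫ g : Matrix.unitaryGroup (Fin n) ℂ, kpow N (g : Matrix (Fin n) (Fin n) ℂ) i k *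
    star (kpow N (g : Matrix (Fin n) (Fin n) ℂ) j l) ∂μ

lemma continuous_corr {n N : ℕ} (i j k l : Fin N → Fin n) :
    Continuous fun M : Matrix (Fin n) (Fin n) ℂ => kpow N M i k * star (kpow N M j l) :=
  (continuous_kpow.matrix_elem i k).mul (continuous_kpow.matrix_elem j l).star

lemma corr_commute {n N : ℕ} {μ : Measure (Matrix.unitaryGroup (Fin n) ℂ)}
    [IsProbabilityMeasure μ]
    (hinv : ∀ g : Matrix.unitaryGroup (Fin n) ℂ, Measure.map (fun x => g * x) μ = μ)
    (k l : Fin N → Fin n) (h : Matrix (Fin n) (Fin n) ℂ) (hh : h ∈ Matrix.unitaryGroup (Fin n) ℂ) :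
    Commute (Matrix.of (corr μ k l)) (kpow N h) := by
  have h1 : Matrix.of (corr μ k l) = kpow N h * Matrix.of (corr μ k l) * star (kpow N h) := by
    ext i j
    rw [Matrix.of_apply, corr, ← integral_mul_left hinv (continuous_corr i j k l) ⟨h, hh⟩]
    have hp : ∀ g : Matrix.unitaryGroup (Fin n) ℂ,
        kpow N (h * g : Matrix (Fin n) (Fin n) ℂ) i k *
          star (kpow N (h * g : Matrix (Fin n) (Fin n) ℂ) j l) =
        ∑ b, ∑ a, kpow N h i a * star (kpow N h j b) *
          (kpow N (g : Matrix (Fin n) (Fin n) ℂ) a k *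
            star (kpow N (g : Matrix (Fin n) (Fin n) ℂ) b l)) := by
      intro g
      rw [kpow_mul, Matrix.mul_apply, Matrix.mul_apply, star_sum, Finset.sum_mul_sum,
        Finset.sum_comm]
      refine Finset.sum_congr rfl fun b _ => Finset.sum_congr rfl fun a _ => ?_
      rw [star_mul']
      ring
    have hint : ∀ a b, Integrable (fun g : Matrix.unitaryGroup (Fin n) ℂ =>
        kpow N h i a * star (kpow N h j b) * (kpow N (g : Matrix (Fin n) (Fin n) ℂ) a k *
            star (kpow N (g : Matrix (Fin n) (Fin n) ℂ) b l))) μ := fun a b =>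
      (integrable_of_continuous μ (continuous_corr _ _ _ _)).const_mul _
    simp only [hp]
    rw [integral_finsetSum _ fun b _ => integrable_finsetSum _ fun a _ => hint a b,
      Matrix.mul_apply]
    refine Finset.sum_congr rfl fun b _ => ?_
    rw [integral_finsetSum _ fun a _ => hint a b, Matrix.mul_apply, Finset.sum_mul]
    refine Finset.sum_congr rfl fun a _ => ?_
    rw [integral_const_mul, Matrix.of_apply, corr, Matrix.star_apply]
    ring
  have h2 : star (kpow N h) * kpow N h = 1 := by
    rw [← kpow_star, ← kpow_mul, Matrix.mem_unitaryGroup_iff'.1 hh, kpow_one]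
  calc Matrix.of (corr μ k l) * kpow N h
      = kpow N h * Matrix.of (corr μ k l) * star (kpow N h) * kpow N h := by rw [← h1]
    _ = kpow N h * Matrix.of (corr μ k l) := by rw [mul_assoc, h2, mul_one]

/-- Contracting the column indices of the correlations leaves an entry of
`g^{⊗N} (g^{⊗N})* = 1`. -/
lemma sum_corr {n N : ℕ} (μ : Measure (Matrix.unitaryGroup (Fin n) ℂ))
    [IsProbabilityMeasure μ] (σ τ : Equiv.Perm (Fin N)) (i j : Fin N → Fin n) :
    ∑ l : Fin N → Fin n, corr μ (l ∘ σ) (l ∘ τ) i j = if i = j ∘ τ.symm ∘ σ then 1 else 0 := by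
  have h : ∀ g : Matrix.unitaryGroup (Fin n) ℂ, ∑ l : Fin N → Fin n,
      kpow N (g : Matrix (Fin n) (Fin n) ℂ) i (l ∘ σ) *
        star (kpow N (g : Matrix (Fin n) (Fin n) ℂ) j (l ∘ τ)) =
      if i = j ∘ τ.symm ∘ σ then 1 else 0 := by
    intro g
    have h1 : kpow N (g : Matrix (Fin n) (Fin n) ℂ) * star (kpow N (g : Matrix (Fin n) (Fin n) ℂ))
        = 1 := by
      rw [← kpow_star, ← kpow_mul, Matrix.mem_unitaryGroup_iff.1 g.2, kpow_one]
    have h2 := congrFun (congrFun h1 i) (j ∘ τ.symm ∘ σ)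
    rw [Matrix.one_apply, Matrix.mul_apply] at h2
    rw [← h2, ← Equiv.sum_comp (σ.arrowCongr (Equiv.refl (Fin n)))]
    refine Finset.sum_congr rfl fun l _ => ?_
    rw [Matrix.star_apply]
    have h3 : kpow N (g : Matrix (Fin n) (Fin n) ℂ) (j ∘ τ.symm ∘ σ) l =
        kpow N (g : Matrix (Fin n) (Fin n) ℂ) j (l ∘ σ.symm ∘ τ) := by
      rw [kpow_apply, kpow_apply, ← Equiv.prod_comp (σ.trans τ.symm)
        fun k => (g : Matrix (Fin n) (Fin n) ℂ) (j k) ((l ∘ σ.symm ∘ τ) k)]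
      simp
    rw [h3]
    have h4 : (σ.arrowCongr (Equiv.refl (Fin n))) l = l ∘ σ.symm := rfl
    rw [h4]
    congr 2
    ext k
    simp
  unfold corr
  rw [← integral_finsetSum]
  · simp only [h, integral_const, probReal_univ, one_smul]
  · exact fun l _ => integrable_of_continuous μ (continuous_corr _ _ _ _)

/-- The integral counts the permutations intertwining `σ` and `τ`. -/
lemma integral_permTrace {n N : ℕ} (hN : N ≤ n) {μ : Measure (Matrix.unitaryGroup (Fin n) ℂ)}
    [IsProbabilityMeasure μ]
    (hinv : ∀ g : Matrix.unitaryGroup (Fin n) ℂ, Measure.map (fun x => g * x) μ = μ)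
    (σ τ : Equiv.Perm (Fin N)) :
    ∫ g : Matrix.unitaryGroup (Fin n) ℂ, star (permTrace (g : Matrix (Fin n) (Fin n) ℂ) τ) *
      permTrace (g : Matrix (Fin n) (Fin n) ℂ) σ ∂μ =
      ((Finset.univ.filter fun π : Equiv.Perm (Fin N) => τ * π = π * σ).card : ℂ) := by
  have h1 : ∫ g : Matrix.unitaryGroup (Fin n) ℂ,
      star (permTrace (g : Matrix (Fin n) (Fin n) ℂ) τ) *
      permTrace (g : Matrix (Fin n) (Fin n) ℂ) σ ∂μ =
      ∑ j : Fin N → Fin n, ∑ i : Fin N → Fin n, corr μ (i ∘ σ) (j ∘ τ) i j := by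
    unfold corr
    simp_rw [← integral_finsetSum Finset.univ
      fun i _ => integrable_of_continuous μ (continuous_corr _ _ _ _)]
    rw [← integral_finsetSum]
    · refine integral_congr_ae (ae_of_all _ fun g => ?_)
      simp only [permTrace, star_sum, Finset.sum_mul_sum, kpow_apply, Function.comp]
      refine Finset.sum_congr rfl fun j _ => Finset.sum_congr rfl fun i _ => ?_
      rw [mul_comm]
    · exact fun j _ => integrable_finsetSum _ fun i _ =>
        integrable_of_continuous μ (continuous_corr _ _ _ _)
  rw [h1]
  set e : Fin N → Fin n := Fin.castLE hN with he
  have hinj : Function.Injective e := Fin.castLE_injective hN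
  have h2 : ∀ i j k l : Fin N → Fin n, corr μ k l i j = ∑ π : Equiv.Perm (Fin N),
      corr μ k l (e ∘ π) e * if i = j ∘ π then 1 else 0 := fun i j k l =>
    commutant_eq hN (A := Matrix.of (corr μ k l)) (corr_commute hinv k l) i j
  have h3 : ∀ j : Fin N → Fin n, ∑ i : Fin N → Fin n, corr μ (i ∘ σ) (j ∘ τ) i j =
      ∑ π : Equiv.Perm (Fin N), corr μ (j ∘ ⇑(π * σ)) (j ∘ τ) (e ∘ π) e := by
    intro j
    rw [Finset.sum_congr rfl fun i _ => h2 i j _ _, Finset.sum_comm]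
    refine Finset.sum_congr rfl fun π _ => ?_
    simp only [mul_ite, mul_one, mul_zero, Finset.sum_ite_eq', Finset.mem_univ, if_true]
    rfl
  simp_rw [h3]
  rw [Finset.sum_comm]
  simp_rw [sum_corr]
  rw [Finset.sum_boole]
  congr 2
  ext π
  simp only [Finset.mem_filter, Finset.mem_univ, true_and]
  rw [hinj.comp_left.eq_iff, Equiv.eq_symm_comp]
  exact ⟨fun h => Equiv.ext (congrFun h), fun h => funext (Equiv.congr_fun h)⟩
lemma permTrace_smul {n N : ℕ} (w : ℂ) (M : Matrix (Fin n) (Fin n) ℂ) (σ : Equiv.Perm (Fin N)) :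
    permTrace (w • M) σ = w ^ N * permTrace M σ := by
  simp [permTrace, Finset.prod_mul_distrib, Finset.mul_sum]

lemma continuous_permTrace {n N : ℕ} (σ : Equiv.Perm (Fin N)) :
    Continuous fun M : Matrix (Fin n) (Fin n) ℂ => permTrace M σ := by
  unfold permTrace
  fun_prop

/-- Translating by a scalar `w` multiplies the integrand by `conj (w ^ N') * w ^ N`, which is not
`1` for a root of unity `w` of order `n + 1`. -/
lemma integral_permTrace_eq_zero {n N N' : ℕ} (hN : N ≤ n) (hN' : N' ≤ n) (hne : N ≠ N')
    {μ : Measure (Matrix.unitaryGroup (Fin n) ℂ)}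
    (hinv : ∀ g : Matrix.unitaryGroup (Fin n) ℂ, Measure.map (fun x => g * x) μ = μ)
    (σ : Equiv.Perm (Fin N)) (τ : Equiv.Perm (Fin N')) :
    ∫ g : Matrix.unitaryGroup (Fin n) ℂ, star (permTrace (g : Matrix (Fin n) (Fin n) ℂ) τ) *
      permTrace (g : Matrix (Fin n) (Fin n) ℂ) σ ∂μ = 0 := by
  set w : ℂ := Complex.exp (2 * Real.pi * Complex.I / (n + 1 : ℕ)) with hw
  have hp : IsPrimitiveRoot w (n + 1) := Complex.isPrimitiveRoot_exp _ (by omega)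
  have hn : ‖w‖ = 1 := hp.norm'_eq_one (by omega)
  have h := integral_mul_left hinv (f := fun M => star (permTrace M τ) * permTrace M σ)
    ((continuous_permTrace τ).star.mul (continuous_permTrace σ))
    ⟨_, diagonal_mem_unitary (fun _ => w) fun _ => hn⟩
  have hd : ∀ M : Matrix (Fin n) (Fin n) ℂ, Matrix.diagonal (fun _ => w) * M = w • M := fun M => by
    ext i j; simp
  have hc : ∀ a b : ℂ, star (w ^ N' * a) * (w ^ N * b) =
      (star (w ^ N') * w ^ N) * (star a * b) := fun a b => by
    rw [star_mul']; ring
  simp only [hd, permTrace_smul, hc, integral_const_mul] at h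
  by_contra h0
  have h1 : star (w ^ N') * w ^ N = 1 := mul_right_cancel₀ h0 (h.trans (one_mul _).symm)
  have h2 : w ^ N' * star (w ^ N') = 1 := by
    have := Complex.mul_conj (w ^ N')
    rw [Complex.normSq_eq_norm_sq, norm_pow, hn] at this
    simpa using this
  have h3 : w ^ N = w ^ N' := by
    calc w ^ N = w ^ N' * star (w ^ N') * w ^ N := by rw [h2, one_mul]
      _ = w ^ N' := by rw [mul_assoc, h1, mul_one]
  exact hne (hp.pow_inj (by omega) (by omega) h3)

/-- **Diaconis–Shahshahani moment identity on `U(n)`.** With respect to the normalized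
Haar measure (characterized as a left-invariant probability measure) on the unitary
group `U(n)`, for tuples `t, s` of nonnegative integers with `∑ j t_j ≤ n` and
`∑ j s_j ≤ n`, one has `∫ conj(T_t(g)) T_s(g) dg = δ_{ts} ∏_j j^{t_j} t_j!`, where
`T_t(g) = ∏_j (tr g^j)^{t_j}`. -/
theorem diaconis_shahshahani_moments
    (n k : ℕ)
    (μ : Measure (Matrix.unitaryGroup (Fin n) ℂ)) [IsProbabilityMeasure μ]
    (hinv : ∀ g : Matrix.unitaryGroup (Fin n) ℂ,
      Measure.map (fun x => g * x) μ = μ)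
    (t s : Fin k → ℕ)
    (ht : ∑ j : Fin k, ((j : ℕ) + 1) * t j ≤ n)
    (hs : ∑ j : Fin k, ((j : ℕ) + 1) * s j ≤ n) :
    (∫ g : Matrix.unitaryGroup (Fin n) ℂ,
        (starRingEnd ℂ)
            (∏ j : Fin k,
              (Matrix.trace ((g : Matrix (Fin n) (Fin n) ℂ) ^ ((j : ℕ) + 1))) ^ (t j)) *
          (∏ j : Fin k,
            (Matrix.trace ((g : Matrix (Fin n) (Fin n) ℂ) ^ ((j : ℕ) + 1))) ^ (s j)) ∂μ)
      = if t = s then ∏ j : Fin k, (((j : ℕ) + 1 : ℕ) : ℂ) ^ (t j) *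
          ((Nat.factorial (t j) : ℕ) : ℂ)
        else 0 := by
  rw [← sum_parts] at ht hs
  obtain ⟨τ, hτ, hτM⟩ := exists_perm (parts t) (parts_pos t) _ rfl
  have hT : ∀ M : Matrix (Fin n) (Fin n) ℂ,
      ∏ j : Fin k, (Matrix.trace (M ^ ((j : ℕ) + 1))) ^ (t j) = permTrace M τ := fun M => by
    rw [hτM, map_parts_prod]
  by_cases hts : t = s
  · subst hts
    rw [if_pos rfl]
    simp only [hT]
    refine (integral_permTrace ht hinv τ τ).trans ?_
    have hc : (Finset.univ.filter fun π : Equiv.Perm (Fin (parts t).sum) => τ * π = π * τ).card =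
        Nat.card (Subgroup.centralizer {τ}) := by
      rw [← Fintype.card_subtype, ← Nat.card_eq_fintype_card]
      exact Nat.card_congr (Equiv.subtypeEquivRight fun π => by
        rw [Subgroup.mem_centralizer_singleton_iff, eq_comm])
    rw [hc, card_centralizer_parts t rfl τ hτ]
    push_cast
    rfl
  · rw [if_neg hts]
    by_cases hN : (parts s).sum = (parts t).sum
    · obtain ⟨σ, hσ, hσM⟩ := exists_perm (parts s) (parts_pos s) _ hN
      have hS : ∀ M : Matrix (Fin n) (Fin n) ℂ,
          ∏ j : Fin k, (Matrix.trace (M ^ ((j : ℕ) + 1))) ^ (s j) = permTrace M σ := fun M => by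
        rw [hσM, map_parts_prod]
      simp only [hT, hS]
      refine (integral_permTrace ht hinv σ τ).trans ?_
      rw [Finset.filter_false_of_mem]
      · simp
      · intro π _ h
        have hτσ : τ = π * σ * π⁻¹ := by rw [← h, mul_inv_cancel_right]
        refine hts (parts_injective (filter_ne_one_inj hN.symm ?_))
        rw [← hτ, ← hσ, hτσ, Equiv.Perm.cycleType_conj]
    · obtain ⟨σ, -, hσM⟩ := exists_perm (parts s) (parts_pos s) _ rfl
      have hS : ∀ M : Matrix (Fin n) (Fin n) ℂ,
          ∏ j : Fin k, (Matrix.trace (M ^ ((j : ℕ) + 1))) ^ (s j) = permTrace M σ := fun M => by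
        rw [hσM, map_parts_prod]
      simp only [hT, hS]
      exact integral_permTrace_eq_zero hs ht hN hinv σ τ
end

section
/- Böttcher–Silbermann exact formula for a Toeplitz determinant with a single pure Fisher–Hartwig singularity (Gamma-product form): Let α, β ∈ ℂ with Re α > −1/2 and α + β, α − β ∉ {−1, −2, −3, …}. Define f on the unit circle by f(e^{iθ}) = |2 sin(θ/2)|^{2α} · e^{iβ(θ−π)} for 0 ≤ θ < 2π, where |2 sin(θ/2)|^{2α} = exp(2α·log|2 sin(θ/2)|). Then f is integrable, and for every n ≥ 1, D_n(f) = ∏_{q=1}^{n} [Γ(q)·Γ(q + 2α)] / [Γ(q + α + β)·Γ(q + α − β)]. -/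
/-!
# The exact Toeplitz determinant of a pure Fisher–Hartwig symbol

**Fourier coefficients.** Put `w θ = 2 sin (θ/2)` and
`C(a, x) = ∫₀^{2π} w^a e^{ix(θ-π)} dθ` for `Re a > -1`. Up to the sign `(-1)^ℓ`, the `ℓ`-th Fourier
coefficient of the symbol is `C(2α, β - ℓ) / 2π`, so what is needed is Cauchy's integral
`C(a, x) = 2π Γ(1+a) / (Γ(1+a/2+x) Γ(1+a/2-x))` (`cauchyInt_eq`). Writing `w` as a sum of two
exponentials relates `C(a+1, x)` to `C(a, x ± 1/2)` (`cauchyInt_add`); integrating the derivative of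
`w^(a+1) e^{ix(θ-π)}` gives a second relation (`cauchyInt_sub`). Together they yield
`(a+1)(a+2) C(a, x) = (a/2+1-x)(a/2+1+x) C(a+2, x)`. Iterating this and dividing by the case
`a = x = 0` expresses `C(a, x)` through `C(a+2n, x) / C(2n, 0)`, which tends to `2^a` because the
mass of `w^(2n)` concentrates at `θ = π` (`cauchyInt_ratio_tendsto`), and through finite products
whose limit is given by Euler's formula for `Γ`; Legendre's duplication formula simplifies it.

**Determinant.** With `u = α + β` and `v = α - β`, the functional equation of `1/Γ` extracts from row
`j` the factor `1 / (Γ(u+n-j) Γ(1+v+j))` and leaves the value at `X = j` of the polynomial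
`∏_{i<k} (X+v-i) · ∏_{k<i<n} (u+i-X)`. Expanded in the Newton basis `e_m = ∏_{i<m} (X+v-i)`, this
polynomial involves only `e_m` with `m ≥ k`, so the remaining matrix is the product of `(e_m(j))`,
whose determinant is a Vandermonde determinant, and a triangular matrix with explicit diagonal
(`det_mixed`). No division by a possibly vanishing quantity occurs: `1/Γ` is entire, and Mathlib's
conventions `Γ = 0` at the poles and `0⁻¹ = 0` give it the right values there.
-/

open MeasureTheory Filter Topology

/-- The `ℓ`-th Fourier coefficient of a function on the unit circle, parametrized by
`θ ∈ [0, 2π)`. -/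
noncomputable def fourierCoeff2 (φ : ℝ → ℂ) (ℓ : ℤ) : ℂ :=
  ((2 * Real.pi : ℝ) : ℂ)⁻¹ *
    ∫ θ in (0 : ℝ)..(2 * Real.pi), Complex.exp (-Complex.I * (ℓ : ℂ) * (θ : ℂ)) * φ θ

/-- The pure Fisher–Hartwig symbol
`f(e^{iθ}) = |2 sin(θ/2)|^{2α} e^{iβ(θ−π)}`, `0 ≤ θ < 2π`, where
`|2 sin(θ/2)|^{2α} = exp(2α log|2 sin(θ/2)|)`. -/
noncomputable def fhPureSymbol (α β : ℂ) (θ : ℝ) : ℂ :=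
  Complex.exp (2 * α * (Real.log |2 * Real.sin (θ / 2)| : ℂ)) *
    Complex.exp (Complex.I * β * ((θ - Real.pi : ℝ) : ℂ))


/-! ### Determinants of reciprocal Gamma values -/

/-- The functional equation of the entire function `1/Γ`, iterated `r` times; valid for every `z`. -/
theorem inv_Gamma_eq_prod_mul (z : ℂ) (r : ℕ) :
    (Complex.Gamma z)⁻¹ = (∏ i ∈ Finset.range r, (z + i)) * (Complex.Gamma (z + r))⁻¹ := by
  induction r with
  | zero => simp
  | succ r ih =>
    rw [ih, Finset.prod_range_succ, Complex.one_div_Gamma_eq_self_mul_one_div_Gamma_add_one]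
    push_cast
    rw [add_assoc z r 1]
    ring

/-- The functional equation of `1/Γ` iterated downwards from `z + 1`; valid for every `z`. -/
theorem inv_Gamma_sub_eq_prod_mul (z : ℂ) (r : ℕ) :
    (Complex.Gamma (z + 1 - r))⁻¹ =
      (∏ i ∈ Finset.range r, (z - i)) * (Complex.Gamma (z + 1))⁻¹ := by
  induction r with
  | zero => simp
  | succ r ih =>
    have h := Complex.one_div_Gamma_eq_self_mul_one_div_Gamma_add_one (z - r)
    rw [show z - r + 1 = z + 1 - (r : ℂ) by ring, ih] at h
    rw [Finset.prod_range_succ]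
    push_cast
    rw [show z + 1 - ((r : ℂ) + 1) = z - r by ring, h]
    ring

/-- With `e_m(X) = ∏_{i<m} (X + v - i)`, the polynomial `e_k(X) · ∏_{i<r} (c i - X)` is a combination
of `e_k, …, e_{k+r}`; its `e_k`-coefficient is the value of the second product at the next node
`X = k - v`. -/
theorem exists_newton_expansion (v : ℂ) (k : ℕ) (c : ℕ → ℂ) (r : ℕ) :
    ∃ d : ℕ → ℂ, (∀ m < k, d m = 0) ∧ (∀ m, k + r < m → d m = 0) ∧
      d k = ∏ i ∈ Finset.range r, (c i - (k - v)) ∧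
      ∀ X : ℂ, (∏ i ∈ Finset.range k, (X + v - i)) * ∏ i ∈ Finset.range r, (c i - X) =
        ∑ m ∈ Finset.range (k + r + 1), (∏ i ∈ Finset.range m, (X + v - i)) * d m := by
  induction r with
  | zero =>
    refine ⟨fun m => if m = k then 1 else 0, ?_, ?_, by simp, ?_⟩
    · intro m hm; simp [hm.ne]
    · intro m hm; simp [show m ≠ k by omega]
    · intro X; simp
  | succ r ih =>
    obtain ⟨d, h1, h2, h3, h4⟩ := ih
    -- multiply by `c r - X = (c r - (m - v)) - (X + v - m)` in the `m`-th term
    refine ⟨fun m => (c r - (m - v)) * d m - if m = 0 then 0 else d (m - 1), ?_, ?_, ?_, ?_⟩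
    · intro m hm
      by_cases h0 : m = 0
      · simp [h0, h1 0 (by omega)]
      · simp [h0, h1 m hm, h1 (m - 1) (by omega)]
    · intro m hm
      simp [show m ≠ 0 by omega, h2 m (by omega), h2 (m - 1) (by omega)]
    · by_cases h0 : k = 0
      · subst h0; simp [Finset.prod_range_succ, h3, mul_comm]
      · simp only [h0, if_false, h1 (k - 1) (by omega), Finset.prod_range_succ, h3]; ring
    · intro X
      rw [Finset.prod_range_succ, ← mul_assoc, h4 X, Finset.sum_mul]
      simp only [mul_sub, Finset.sum_sub_distrib]
      rw [show k + (r + 1) + 1 = (k + r + 1) + 1 by ring,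
        Finset.sum_range_succ (fun m => _ * (_ * d m)), h2 (k + r + 1) (by omega),
        Finset.sum_range_succ' (fun m => _ * ite (m = 0) _ _)]
      simp only [Finset.prod_range_succ, Nat.add_eq_zero_iff, one_ne_zero, and_false, if_false,
        Nat.add_sub_cancel, if_true, mul_zero, add_zero]
      rw [← Finset.sum_sub_distrib, ← Finset.sum_sub_distrib]
      refine Finset.sum_congr rfl fun m _ => ?_
      ring

/-- The polynomials `∏_{i<k} (X + v - i)` are monic of degree `k`, so their values at
`X = 0, …, n` have the Vandermonde determinant of these nodes. -/
theorem det_falling (v : ℂ) (n : ℕ) :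
    (Matrix.of fun j k : Fin (n + 1) =>
      ∏ i ∈ Finset.range k, (((j : ℕ) : ℂ) + v - i)).det = (n.superFactorial : ℂ) := by
  rw [← Matrix.det_vandermonde_id_eq_superFactorial,
    Matrix.det_eval_matrixOfPolynomials_eq_det_vandermonde _
      (fun k : Fin (n + 1) => ∏ i ∈ Finset.range k, (Polynomial.X - Polynomial.C ((i : ℂ) - v)))]
  · congr 1
    ext j k
    simp only [Matrix.of_apply, Polynomial.eval_prod]
    refine Finset.prod_congr rfl fun i _ => ?_
    simp; ring
  · intro k
    rw [Polynomial.natDegree_prod_of_monic _ _ fun i _ => Polynomial.monic_X_sub_C _]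
    simp only [Polynomial.natDegree_X_sub_C, Finset.sum_const, Finset.card_range, smul_eq_mul,
      mul_one]
  · intro k
    exact Polynomial.monic_prod_X_sub_C _ _

/-- The Newton expansion factors this matrix as the one of `det_falling` times a lower triangular
matrix, whose diagonal supplies the second factor on the right. -/
theorem det_mixed (u v : ℂ) (n : ℕ) :
    (Matrix.of fun j k : Fin (n + 1) =>
      (∏ i ∈ Finset.range k, (((j : ℕ) : ℂ) + v - i)) *
        ∏ i ∈ Finset.range (n - k), (u + k + 1 + i - ((j : ℕ) : ℂ))).det =
    (n.superFactorial : ℂ) *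
      ∏ r ∈ Finset.range (n + 1), ∏ i ∈ Finset.range r, (1 + u + v + i) := by
  choose d h1 h2 h3 h4 using fun k : ℕ =>
    exists_newton_expansion v k (fun i => u + k + 1 + i) (n - k)
  have key : (Matrix.of fun j k : Fin (n + 1) =>
      (∏ i ∈ Finset.range k, (((j : ℕ) : ℂ) + v - i)) *
        ∏ i ∈ Finset.range (n - k), (u + k + 1 + i - ((j : ℕ) : ℂ))) =
      (Matrix.of fun j k : Fin (n + 1) => ∏ i ∈ Finset.range k, (((j : ℕ) : ℂ) + v - i)) *
        Matrix.of fun m k : Fin (n + 1) => d k m := by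
    ext j k
    rw [Matrix.mul_apply]
    simp only [Matrix.of_apply]
    rw [h4 k, show (k : ℕ) + (n - k) + 1 = n + 1 by omega, ← Fin.sum_univ_eq_sum_range
      (fun m => (∏ i ∈ Finset.range m, (((j : ℕ) : ℂ) + v - i)) * d k m)]
  rw [key, Matrix.det_mul, det_falling, Matrix.det_of_isLowerTriangular]
  · congr 1
    simp only [Matrix.of_apply, h3]
    rw [Fin.prod_univ_eq_prod_range
      (fun k => ∏ i ∈ Finset.range (n - k), (u + k + 1 + i - ((k : ℂ) - v))) (n + 1),
      ← Finset.prod_range_reflect]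
    refine Finset.prod_congr rfl fun r hr => ?_
    rw [Finset.mem_range] at hr
    rw [show n - (n + 1 - 1 - r) = r by omega]
    exact Finset.prod_congr rfl fun i _ => by ring
  · intro m k hmk
    exact h1 _ _ hmk

/-- The Toeplitz determinant of the entries `Γ(1+u+v) / (Γ(1+u+k-j) Γ(1+v+j-k))`, obtained by
extracting row factors and applying `det_mixed`. -/
theorem det_gamma (u v : ℂ) (h : ∀ i : ℕ, 1 + u + v + i ≠ 0) (n : ℕ) :
    (Matrix.of fun j k : Fin (n + 1) =>
      Complex.Gamma (1 + u + v) * ((Complex.Gamma (1 + u + k - j))⁻¹ *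
        (Complex.Gamma (1 + v + j - k))⁻¹)).det =
    ∏ q ∈ Finset.Icc 1 (n + 1), (Complex.Gamma q * Complex.Gamma (q + u + v)) /
      (Complex.Gamma (q + u) * Complex.Gamma (q + v)) := by
  have hM : (Matrix.of fun j k : Fin (n + 1) =>
      Complex.Gamma (1 + u + v) * ((Complex.Gamma (1 + u + k - j))⁻¹ *
        (Complex.Gamma (1 + v + j - k))⁻¹)) =
      Matrix.of fun j k : Fin (n + 1) => (Complex.Gamma (1 + u + v) *
        ((Complex.Gamma (1 + u + (n - (j : ℕ) : ℕ)))⁻¹ * (Complex.Gamma (1 + v + (j : ℕ)))⁻¹)) *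
        (Matrix.of fun j k : Fin (n + 1) =>
          (∏ i ∈ Finset.range k, (((j : ℕ) : ℂ) + v - i)) *
          ∏ i ∈ Finset.range (n - k), (u + k + 1 + i - ((j : ℕ) : ℂ))) j k := by
    ext j k
    simp only [Matrix.of_apply]
    have hj : (j : ℕ) ≤ n := by omega
    have hk : (k : ℕ) ≤ n := by omega
    have e1 := inv_Gamma_eq_prod_mul (1 + u + (k : ℕ) - (j : ℕ)) (n - k)
    have e2 := inv_Gamma_sub_eq_prod_mul ((j : ℕ) + v) k
    rw [show 1 + u + ((k : ℕ) : ℂ) - (j : ℕ) + (n - (k : ℕ) : ℕ) = 1 + u + (n - (j : ℕ) : ℕ) by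
      push_cast [hj, hk]; ring] at e1
    rw [show ((j : ℕ) : ℂ) + v + 1 - (k : ℕ) = 1 + v + (j : ℕ) - (k : ℕ) by ring,
      show ((j : ℕ) : ℂ) + v + 1 = 1 + v + (j : ℕ) by ring] at e2
    have e3 : ∏ i ∈ Finset.range (n - k), (1 + u + ((k : ℕ) : ℂ) - (j : ℕ) + (i : ℂ)) =
        ∏ i ∈ Finset.range (n - k), (u + (k : ℕ) + 1 + i - (j : ℕ)) :=
      Finset.prod_congr rfl fun i _ => by ring
    rw [e1, e2, e3]
    ring
  have hG : ∀ r : ℕ, Complex.Gamma (1 + u + v) * ∏ i ∈ Finset.range r, (1 + u + v + i) =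
      Complex.Gamma (1 + u + v + r) := by
    intro r
    induction r with
    | zero => simp
    | succ r ih =>
      rw [Finset.prod_range_succ, ← mul_assoc, ih]
      push_cast
      rw [← add_assoc, Complex.Gamma_add_one _ (h r)]
      ring
  have hS : (n.superFactorial : ℂ) =
      ∏ r ∈ Finset.range (n + 1), Complex.Gamma (1 + r) := by
    rw [← Nat.prod_range_succ_factorial]
    push_cast
    refine Finset.prod_congr rfl fun r _ => ?_
    rw [add_comm, Complex.Gamma_nat_eq_factorial]
  have hR : ∏ j ∈ Finset.range (n + 1), (Complex.Gamma (1 + u + (n - j : ℕ)))⁻¹ =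
      ∏ j ∈ Finset.range (n + 1), (Complex.Gamma (1 + u + j))⁻¹ :=
    Finset.prod_range_reflect (fun j : ℕ => (Complex.Gamma (1 + u + j))⁻¹) (n + 1)
  rw [hM, Matrix.det_mul_column, det_mixed, Finset.prod_mul_distrib, Finset.prod_mul_distrib,
    Fin.prod_univ_eq_prod_range (fun _ => Complex.Gamma (1 + u + v)) (n + 1),
    Fin.prod_univ_eq_prod_range (fun j => (Complex.Gamma (1 + u + (n - j : ℕ)))⁻¹) (n + 1),
    Fin.prod_univ_eq_prod_range (fun j => (Complex.Gamma (1 + v + j))⁻¹) (n + 1),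
    hR, hS]
  rw [← Finset.Ico_add_one_right_eq_Icc, Finset.prod_Ico_eq_prod_range]
  simp only [← Finset.prod_mul_distrib, Nat.add_sub_cancel]
  refine Finset.prod_congr rfl fun r _ => ?_
  rw [show ∀ a b c d e : ℂ, a * (b * c) * (d * e) = (d * (a * e)) * (b * c) by intros; ring, hG,
    div_eq_mul_inv, mul_inv]
  push_cast
  rw [show 1 + u + v + (r : ℂ) = 1 + r + u + v by ring, show 1 + u + (r : ℂ) = 1 + r + u by ring,
    show 1 + v + (r : ℂ) = 1 + r + v by ring]

/-! ### Cauchy's integral: integrability and recurrences -/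

/-- The base `2 sin (θ/2)` of the Fisher–Hartwig modulus, as a complex number. -/
noncomputable def fhWeight (θ : ℝ) : ℂ := ((2 * Real.sin (θ / 2) : ℝ) : ℂ)

/-- The phase `e^{ix(θ-π)}` with complex frequency `x`. -/
noncomputable def fhPhase (x : ℂ) (θ : ℝ) : ℂ :=
  Complex.exp (Complex.I * x * ((θ - Real.pi : ℝ) : ℂ))

/-- Cauchy's integral `∫₀^{2π} (2 sin (θ/2))^a e^{ix(θ-π)} dθ`. The complex power vanishes at the
endpoints when `Re a > 0`, unlike `exp (a log |⋅|)` with `log 0 = 0`; this makes the integrand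
continuous on the closed interval. -/
noncomputable def cauchyInt (a x : ℂ) : ℂ :=
  ∫ θ in (0 : ℝ)..(2 * Real.pi), fhWeight θ ^ a * fhPhase x θ

theorem sin_half_pos {θ : ℝ} (h : θ ∈ Set.Ioo 0 (2 * Real.pi)) : 0 < 2 * Real.sin (θ / 2) := by
  have := Real.sin_pos_of_pos_of_lt_pi (x := θ / 2) (by linarith [h.1]) (by linarith [h.2])
  positivity

theorem continuous_fhWeight : Continuous fhWeight := by
  unfold fhWeight; fun_prop

theorem continuous_fhPhase (x : ℂ) : Continuous (fhPhase x) := by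
  unfold fhPhase; fun_prop

theorem fhWeight_ne_zero {θ : ℝ} (h : θ ∈ Set.Ioo 0 (2 * Real.pi)) : fhWeight θ ≠ 0 := by
  unfold fhWeight
  exact_mod_cast (sin_half_pos h).ne'

/-- For `-1 < r < 0`, Jordan's inequality `sin t ≥ 2t/π` on `[0, π/2]` bounds the integrand by a multiple
of `θ^r + (2π - θ)^r`. -/
theorem intervalIntegrable_sin_rpow {r : ℝ} (hr : -1 < r) :
    IntervalIntegrable (fun θ => (2 * Real.sin (θ / 2)) ^ r) volume 0 (2 * Real.pi) := by
  have hpi := Real.pi_pos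
  rcases le_or_gt 0 r with h0 | h0
  · refine (Continuous.rpow_const (by fun_prop) fun _ => Or.inr h0).intervalIntegrable _ _
  have hb : IntervalIntegrable
      (fun θ : ℝ => (2 / Real.pi) ^ r * (θ ^ r + (2 * Real.pi - θ) ^ r)) volume 0 (2 * Real.pi) := by
    have h1 := intervalIntegral.intervalIntegrable_rpow' (a := 0) (b := 2 * Real.pi) hr
    have h2 := h1.comp_sub_left (2 * Real.pi)
    simp only [sub_zero, sub_self] at h2
    exact (h1.add h2.symm).const_mul _
  rw [intervalIntegrable_iff_integrableOn_Ioo_of_le (by positivity)] at hb ⊢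
  refine Integrable.mono' hb ?_ ?_
  · refine ContinuousOn.aestronglyMeasurable (fun θ hθ => ?_) measurableSet_Ioo
    exact (ContinuousAt.rpow_const (f := fun θ : ℝ => 2 * Real.sin (θ / 2)) (by fun_prop) (Or.inl (sin_half_pos hθ).ne')).continuousWithinAt
  · refine (ae_restrict_iff' measurableSet_Ioo).2 (Eventually.of_forall fun θ hθ => ?_)
    rw [Real.norm_of_nonneg (Real.rpow_nonneg (sin_half_pos hθ).le _)]
    have t1 : 0 < θ := hθ.1
    have t2 : 0 < 2 * Real.pi - θ := by linarith [hθ.2]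
    have p1 := Real.rpow_nonneg t1.le r
    have p2 := Real.rpow_nonneg t2.le r
    have p3 : 0 ≤ (2 / Real.pi) ^ r := by positivity
    rcases le_total θ Real.pi with h | h
    · have hs := Real.mul_le_sin (x := θ / 2) (by linarith) (by linarith)
      have : 2 / Real.pi * θ ≤ 2 * Real.sin (θ / 2) := by linarith
      calc _ ≤ (2 / Real.pi * θ) ^ r :=
            Real.rpow_le_rpow_of_nonpos (by positivity) this h0.le
        _ = (2 / Real.pi) ^ r * θ ^ r := Real.mul_rpow (by positivity) t1.le
        _ ≤ _ := by gcongr; linarith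
    · have hs := Real.mul_le_sin (x := Real.pi - θ / 2) (by linarith) (by linarith)
      rw [Real.sin_pi_sub] at hs
      have : 2 / Real.pi * (2 * Real.pi - θ) ≤ 2 * Real.sin (θ / 2) := by linarith
      calc _ ≤ (2 / Real.pi * (2 * Real.pi - θ)) ^ r :=
            Real.rpow_le_rpow_of_nonpos (by positivity) this h0.le
        _ = (2 / Real.pi) ^ r * (2 * Real.pi - θ) ^ r := Real.mul_rpow (by positivity) t2.le
        _ ≤ _ := by gcongr; linarith

theorem continuousAt_integrand (a x : ℂ) {θ : ℝ} (hθ : θ ∈ Set.Ioo 0 (2 * Real.pi)) :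
    ContinuousAt (fun θ => fhWeight θ ^ a * fhPhase x θ) θ := by
  refine ContinuousAt.mul ?_ (continuous_fhPhase x).continuousAt
  refine continuous_fhWeight.continuousAt.cpow continuousAt_const ?_
  unfold fhWeight
  exact Complex.ofReal_mem_slitPlane.2 (sin_half_pos hθ)

theorem intervalIntegrable_integrand {a : ℂ} (ha : -1 < a.re) (x : ℂ) :
    IntervalIntegrable (fun θ => fhWeight θ ^ a * fhPhase x θ) volume 0 (2 * Real.pi) := by
  have hpi := Real.pi_pos
  have hw : IntervalIntegrable (fun θ => fhWeight θ ^ a) volume 0 (2 * Real.pi) := by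
    have hb := intervalIntegrable_sin_rpow ha
    rw [intervalIntegrable_iff_integrableOn_Ioo_of_le (by positivity)] at hb ⊢
    refine Integrable.mono' hb ?_ ?_
    · refine ContinuousOn.aestronglyMeasurable (fun θ hθ => ?_) measurableSet_Ioo
      have := continuousAt_integrand a 0 hθ
      simpa [fhPhase] using this.continuousWithinAt
    · refine (ae_restrict_iff' measurableSet_Ioo).2 (Eventually.of_forall fun θ hθ => ?_)
      exact (Complex.norm_cpow_eq_rpow_re_of_pos (sin_half_pos hθ) a).le
  exact hw.mul_continuousOn (continuous_fhPhase x).continuousOn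

/-- Integrands need only be compared away from the endpoints, where the symbol is singular. -/
theorem integral_congr_Ioo {f g : ℝ → ℂ}
    (h : ∀ θ ∈ Set.Ioo 0 (2 * Real.pi), f θ = g θ) :
    ∫ θ in (0 : ℝ)..(2 * Real.pi), f θ = ∫ θ in (0 : ℝ)..(2 * Real.pi), g θ := by
  have hpi := Real.pi_pos
  rw [intervalIntegral.integral_of_le (by positivity), intervalIntegral.integral_of_le (by positivity),
    integral_Ioc_eq_integral_Ioo, integral_Ioc_eq_integral_Ioo]
  exact setIntegral_congr_fun measurableSet_Ioo h

theorem fhPhase_add (x y : ℂ) (θ : ℝ) : fhPhase (x + y) θ = fhPhase x θ * fhPhase y θ := by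
  unfold fhPhase
  rw [← Complex.exp_add]; ring_nf

theorem fhPhase_half (θ : ℝ) :
    fhPhase (1 / 2) θ = (Real.sin (θ / 2) : ℂ) - Complex.I * Real.cos (θ / 2) := by
  unfold fhPhase
  rw [show Complex.I * (1 / 2) * ((θ - Real.pi : ℝ) : ℂ) = ((θ / 2 - Real.pi / 2 : ℝ) : ℂ) * Complex.I by
    push_cast; ring, Complex.exp_mul_I, ← Complex.ofReal_cos, ← Complex.ofReal_sin,
    Real.cos_sub_pi_div_two, Real.sin_sub_pi_div_two]
  push_cast; ring

theorem fhPhase_neg_half (θ : ℝ) :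
    fhPhase (-(1 / 2)) θ = (Real.sin (θ / 2) : ℂ) + Complex.I * Real.cos (θ / 2) := by
  unfold fhPhase
  rw [show Complex.I * (-(1 / 2)) * ((θ - Real.pi : ℝ) : ℂ) = ((Real.pi / 2 - θ / 2 : ℝ) : ℂ) * Complex.I by
    push_cast; ring, Complex.exp_mul_I, ← Complex.ofReal_cos, ← Complex.ofReal_sin,
    Real.cos_pi_div_two_sub, Real.sin_pi_div_two_sub]
  ring

/-- Integrate `w = e^{i(θ-π)/2} + e^{-i(θ-π)/2}` against `w^a e^{ix(θ-π)}`. -/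
theorem cauchyInt_add {a : ℂ} (ha : -1 < a.re) (x : ℂ) :
    cauchyInt (a + 1) x = cauchyInt a (x + 1 / 2) + cauchyInt a (x - 1 / 2) := by
  unfold cauchyInt
  rw [← intervalIntegral.integral_add (intervalIntegrable_integrand ha _)
    (intervalIntegrable_integrand ha _)]
  refine integral_congr_Ioo fun θ hθ => ?_
  rw [sub_eq_add_neg x, fhPhase_add, fhPhase_add, fhPhase_half, fhPhase_neg_half,
    Complex.cpow_add _ _ (fhWeight_ne_zero hθ), Complex.cpow_one]
  have hw : fhWeight θ = 2 * (Real.sin (θ / 2) : ℂ) := by simp [fhWeight]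
  linear_combination fhWeight θ ^ a * fhPhase x θ * hw

/-- The derivative of `w^(a+1) e^{ix(θ-π)}` integrates to zero, as this function vanishes at both
endpoints. -/
theorem cauchyInt_sub {a : ℂ} (ha : -1 < a.re) (x : ℂ) :
    (a + 1) * (cauchyInt a (x + 1 / 2) - cauchyInt a (x - 1 / 2)) =
      -(2 * x) * cauchyInt (a + 1) x := by
  have ha1 : 0 < (a + 1).re := by simp; linarith
  have hpi := Real.pi_pos
  have hderiv : ∀ θ ∈ Set.Ioo 0 (2 * Real.pi),
      HasDerivAt (fun θ => fhWeight θ ^ (a + 1) * fhPhase x θ)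
        ((a + 1) * (Complex.I / 2) * (fhWeight θ ^ a * fhPhase (x + 1 / 2) θ -
          fhWeight θ ^ a * fhPhase (x - 1 / 2) θ) +
          Complex.I * x * (fhWeight θ ^ (a + 1) * fhPhase x θ)) θ := by
    intro θ hθ
    have hw : HasDerivAt fhWeight (Real.cos (θ / 2) : ℂ) θ := by
      have : HasDerivAt (fun θ : ℝ => 2 * Real.sin (θ / 2)) (Real.cos (θ / 2)) θ := by
        convert! ((Real.hasDerivAt_sin (θ / 2)).comp θ ((hasDerivAt_id θ).div_const 2)).const_mul 2
          using 1
        ring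
      exact this.ofReal_comp
    have hp : HasDerivAt (fhPhase x) (Complex.I * x * fhPhase x θ) θ := by
      have h1 : HasDerivAt (fun θ : ℝ => ((θ - Real.pi : ℝ) : ℂ)) ((1 : ℝ) : ℂ) θ :=
        ((hasDerivAt_id θ).sub_const Real.pi).ofReal_comp
      convert! (h1.const_mul (Complex.I * x)).cexp using 1
      simp [fhPhase, mul_comm]
    have hc := (Complex.hasStrictDerivAt_cpow_const (x := fhWeight θ) (c := a + 1)
      (Complex.ofReal_mem_slitPlane.2 (sin_half_pos hθ))).hasDerivAt.comp θ hw
    convert! hc.mul hp using 1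
    rw [sub_eq_add_neg x, fhPhase_add, fhPhase_add, fhPhase_half, fhPhase_neg_half]
    simp only [add_sub_cancel_right, Function.comp]
    linear_combination (-(a + 1) * fhWeight θ ^ a * fhPhase x θ * (Real.cos (θ / 2) : ℂ)) *
      Complex.I_sq
  have hcont : ContinuousOn (fun θ => fhWeight θ ^ (a + 1) * fhPhase x θ)
      (Set.Icc 0 (2 * Real.pi)) := by
    refine ContinuousOn.mul ?_ (continuous_fhPhase x).continuousOn
    have : Continuous fun t : ℝ => (t : ℂ) ^ (a + 1) := Complex.continuous_ofReal_cpow_const ha1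
    exact (this.comp (show Continuous fun θ : ℝ => 2 * Real.sin (θ / 2) by fun_prop)).continuousOn
  have i1 := intervalIntegrable_integrand ha (x + 1 / 2)
  have i2 := intervalIntegrable_integrand ha (x - 1 / 2)
  have i3 := intervalIntegrable_integrand (a := a + 1) (by linarith) x
  have h := intervalIntegral.integral_eq_sub_of_hasDerivAt_of_le (by positivity) hcont hderiv
    (((i1.sub i2).const_mul _).add (i3.const_mul _))
  have hne : a + 1 ≠ 0 := fun h => by simp [h] at ha1
  rw [intervalIntegral.integral_add ((i1.sub i2).const_mul _) (i3.const_mul _),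
    intervalIntegral.integral_const_mul, intervalIntegral.integral_const_mul,
    intervalIntegral.integral_sub i1 i2] at h
  simp only [fhWeight, mul_div_cancel_left₀ _ (two_ne_zero' ℝ), Real.sin_pi, zero_div, Real.sin_zero,
    mul_zero, Complex.ofReal_zero, Complex.zero_cpow hne, zero_mul, sub_zero] at h
  change (a + 1) * (Complex.I / 2) * (cauchyInt a (x + 1 / 2) - cauchyInt a (x - 1 / 2)) +
    Complex.I * x * cauchyInt (a + 1) x = 0 at h
  refine mul_left_cancel₀ Complex.I_ne_zero ?_
  linear_combination 2 * h

/-- The two first-order relations combined to raise `a` by `2` at a fixed frequency `x`. -/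
theorem cauchyInt_rec {a : ℂ} (ha : -1 < a.re) (x : ℂ) :
    cauchyInt a x * ((a + 1) * (a + 2)) =
      (a / 2 + 1 - x) * (a / 2 + 1 + x) * cauchyInt (a + 2) x := by
  have ha1 : -1 < (a + 1).re := by simp; linarith
  have h1 := cauchyInt_add ha (x - 1 / 2)
  have h2 := cauchyInt_sub ha (x - 1 / 2)
  have h3 := cauchyInt_add ha1 x
  have h4 := cauchyInt_sub ha1 x
  rw [sub_add_cancel] at h1 h2
  rw [show a + 1 + 1 = a + 2 by ring] at h3 h4
  linear_combination (-(a + 1) * (a + 2) / 2) * h1 + (a + 2) / 2 * h2 -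
    (a + 2 - 2 * x) * (a + 2) / 4 * h3 - (a + 2 - 2 * x) / 4 * h4

theorem cauchyInt_prod {a : ℂ} (ha : -1 < a.re) (x : ℂ) (n : ℕ) :
    cauchyInt a x * (4 ^ n * ((∏ j ∈ Finset.range n, (a / 2 + 1 / 2 + j)) *
      ∏ j ∈ Finset.range n, (a / 2 + 1 + j))) =
      ((∏ j ∈ Finset.range n, (a / 2 + 1 - x + j)) * ∏ j ∈ Finset.range n, (a / 2 + 1 + x + j)) *
        cauchyInt (a + 2 * n) x := by
  induction n with
  | zero => simp
  | succ n ih =>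
    have han : -1 < (a + 2 * n).re := by
      have : (0 : ℝ) ≤ 2 * n := by positivity
      simp; linarith
    have h := cauchyInt_rec han x
    simp only [Finset.prod_range_succ]
    push_cast
    rw [show a + 2 * ((n : ℂ) + 1) = a + 2 * n + 2 by ring]
    linear_combination 4 * (a / 2 + 1 / 2 + n) * (a / 2 + 1 + n) * ih +
      ((∏ j ∈ Finset.range n, (a / 2 + 1 - x + j)) *
        ∏ j ∈ Finset.range n, (a / 2 + 1 + x + j)) * h

/-! ### Evaluation of Cauchy's integral -/

/-- On `[0, 2π]` the function `w²` has its unique maximum at `θ = π`, so the probability measures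
proportional to `w^(2n) dθ` concentrate there, and `w^a e^{ix(θ-π)}` equals `2^a` at `θ = π`. -/
theorem cauchyInt_ratio_tendsto {a : ℂ} (ha : -1 < a.re) (x : ℂ) :
    Tendsto (fun n : ℕ => (cauchyInt (2 * n) 0)⁻¹ * cauchyInt (a + 2 * n) x) atTop
      (𝓝 (2 ^ a)) := by
  have hpi := Real.pi_pos
  have hle : (0 : ℝ) ≤ 2 * Real.pi := by positivity
  have hmem : Real.pi ∈ Set.Ioo 0 (2 * Real.pi) := ⟨hpi, by linarith⟩
  have hint := intervalIntegrable_integrand ha x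
  rw [intervalIntegrable_iff_integrableOn_Icc_of_le hle] at hint
  have key := tendsto_setIntegral_pow_smul_of_unique_maximum_of_isCompact_of_integrableOn
    (μ := volume) (s := Set.Icc 0 (2 * Real.pi)) (x₀ := Real.pi)
    (c := fun θ => (2 * Real.sin (θ / 2)) ^ 2)
    (g := fun θ => fhWeight θ ^ a * fhPhase x θ) isCompact_Icc
    (by fun_prop) ?_ (fun _ _ => by positivity) (by simp) ?_ hint
    (continuousAt_integrand a x hmem).continuousWithinAt
  · have hlim : fhWeight Real.pi ^ a * fhPhase x Real.pi = 2 ^ a := by simp [fhWeight, fhPhase]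
    rw [hlim] at key
    refine key.congr fun n => ?_
    have e1 : cauchyInt (2 * n) 0 =
        ((∫ θ in Set.Icc 0 (2 * Real.pi), ((2 * Real.sin (θ / 2)) ^ 2) ^ n : ℝ) : ℂ) := by
      unfold cauchyInt
      rw [integral_Icc_eq_integral_Ioc, ← intervalIntegral.integral_of_le hle,
        ← intervalIntegral.integral_ofReal]
      refine integral_congr_Ioo fun θ hθ => ?_
      rw [show (2 * n : ℂ) = ((2 * n : ℕ) : ℂ) by push_cast; rfl, Complex.cpow_natCast]
      simp [fhPhase, fhWeight, pow_mul]
    have e2 : cauchyInt (a + 2 * n) x =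
        ∫ θ in Set.Icc 0 (2 * Real.pi), ((2 * Real.sin (θ / 2)) ^ 2) ^ n •
          (fhWeight θ ^ a * fhPhase x θ) := by
      unfold cauchyInt
      rw [integral_Icc_eq_integral_Ioc, ← intervalIntegral.integral_of_le hle]
      refine integral_congr_Ioo fun θ hθ => ?_
      rw [Complex.cpow_add _ _ (fhWeight_ne_zero hθ),
        show (2 * n : ℂ) = ((2 * n : ℕ) : ℂ) by push_cast; rfl, Complex.cpow_natCast,
        Complex.real_smul, pow_mul]
      conv_lhs => rw [mul_right_comm, mul_comm]
      simp [fhWeight]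
    rw [e1, e2, Complex.real_smul, Complex.ofReal_inv]
  · intro y hy hne
    have h0 : 0 ≤ Real.sin (y / 2) :=
      Real.sin_nonneg_of_nonneg_of_le_pi (by linarith [hy.1]) (by linarith [hy.2])
    have h1 : Real.sin (y / 2) < 1 := by
      refine lt_of_le_of_ne (Real.sin_le_one _) fun h => hne ?_
      have hc : Real.cos (y / 2 - Real.pi / 2) = 1 := by rw [Real.cos_sub_pi_div_two, h]
      have := (Real.cos_eq_one_iff_of_lt_of_lt (by linarith [hy.1]) (by linarith [hy.2])).1 hc
      linarith
    simp only [Real.sin_pi_div_two]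
    nlinarith
  · rw [interior_Icc]
    exact subset_closure hmem

/-- Euler's limit formula for `1/Γ`, valid at the poles of `Γ` too, where both sides are eventually `0`. -/
theorem tendsto_inv_GammaSeq (z : ℂ) :
    Tendsto (fun n => (Complex.GammaSeq z n)⁻¹) atTop (𝓝 (Complex.Gamma z)⁻¹) := by
  by_cases h : Complex.Gamma z = 0
  · obtain ⟨m, rfl⟩ := (Complex.Gamma_eq_zero_iff z).1 h
    refine tendsto_const_nhds.congr' ?_
    filter_upwards [eventually_ge_atTop m] with n hn
    rw [h, Complex.GammaSeq, Finset.prod_eq_zero (i := m) (by simp; omega) (by simp)]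
    simp
  · exact (Complex.GammaSeq_tendsto_Gamma z).inv₀ h

theorem prod_eq_inv_GammaSeq (z : ℂ) {n : ℕ} (hn : n ≠ 0) :
    ∏ j ∈ Finset.range (n + 1), (z + j) =
      (n : ℂ) ^ z * n.factorial * (Complex.GammaSeq z n)⁻¹ := by
  have h1 : (n : ℂ) ^ z ≠ 0 := by simp [Complex.cpow_eq_zero_iff, hn]
  have h2 : (n.factorial : ℂ) ≠ 0 := by exact_mod_cast n.factorial_ne_zero
  rw [Complex.GammaSeq, inv_div]
  field_simp

theorem cauchyInt_zero_zero : cauchyInt 0 0 = 2 * Real.pi := by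
  simp [cauchyInt, fhPhase]

/-- The algebra behind `cauchyInt_eq`. There `f = n!`, `F = 4^(n+1)`, and the `p`'s, `g`'s and `i`'s are
the powers `n^z`, the terms of Euler's sequence for `Γ(z)` and their inverses, so that each
`p * f * i` is a finite product `∏_{j≤n} (z + j)`; `h1` and `h0` are two instances of
`cauchyInt_prod`. -/
theorem cancel_identity {F S T S0 c f g1 g2 g3 i1 i2 i3 i4 i5 i6 p1 p2 p3 p4 p5 p6 : ℂ}
    (hc : F ≠ 0) (q1 : p1 * f * i1 ≠ 0) (q2 : p2 * f * i2 ≠ 0) (q3 : p3 * f * i3 ≠ 0)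
    (hS0 : S0 ≠ 0) (c1 : g1 * i1 = 1) (c2 : g2 * i2 = 1) (c3 : g3 * i3 = 1)
    (h0 : c * (F * (p4 * f * i4 * (p3 * f * i3))) = p3 * f * i3 * (p3 * f * i3) * S0)
    (h1 : S * (F * (p1 * f * i1 * (p2 * f * i2))) = p5 * f * i5 * (p6 * f * i6) * T)
    (e : p1 * p2 * p3 = p5 * p6 * p4) :
    c * (S0⁻¹ * T) * (g1 * g2 * g3 * (i6 * i5 * i4)) = S := by
  have h0' : c * (F * (p4 * f * i4)) = p3 * f * i3 * S0 := by
    refine mul_right_cancel₀ q3 ?_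
    linear_combination h0
  refine mul_right_cancel₀ (mul_ne_zero (mul_ne_zero hS0 hc)
    (mul_ne_zero (mul_ne_zero q1 q2) q3)) ?_
  calc _ = c * (S0⁻¹ * S0) * T * (g1 * i1) * (g2 * i2) * (g3 * i3) * (i6 * i5 * i4) * F * f ^ 3 *
        (p1 * p2 * p3) := by ring
    _ = p5 * f * i5 * (p6 * f * i6) * T * (c * (F * (p4 * f * i4))) := by
      rw [inv_mul_cancel₀ hS0, c1, c2, c3, e]; ring
    _ = _ := by rw [← h1, h0']; ring

/-- Cauchy's integral, for every complex frequency `x`. -/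
theorem cauchyInt_eq {a : ℂ} (ha : -1 < a.re) (x : ℂ) :
    cauchyInt a x = 2 * Real.pi * (Complex.Gamma (1 + a) *
      ((Complex.Gamma (1 + a / 2 + x))⁻¹ * (Complex.Gamma (1 + a / 2 - x))⁻¹)) := by
  set G := Complex.GammaSeq with hG
  have hlim : Tendsto (fun n : ℕ => 2 * Real.pi *
      ((cauchyInt (2 * (n + 1 : ℕ)) 0)⁻¹ * cauchyInt (a + 2 * (n + 1 : ℕ)) x) *
      (G (a / 2 + 1 / 2) n * G (a / 2 + 1) n * G 1 n *
        ((G (a / 2 + 1 + x) n)⁻¹ * (G (a / 2 + 1 - x) n)⁻¹ * (G (1 / 2) n)⁻¹))) atTop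
      (𝓝 (2 * Real.pi * 2 ^ a * (Complex.Gamma (a / 2 + 1 / 2) * Complex.Gamma (a / 2 + 1) *
        Complex.Gamma 1 * ((Complex.Gamma (a / 2 + 1 + x))⁻¹ * (Complex.Gamma (a / 2 + 1 - x))⁻¹ *
          (Complex.Gamma (1 / 2))⁻¹)))) := by
    have hr := (cauchyInt_ratio_tendsto ha x).comp (tendsto_add_atTop_nat 1)
    exact (tendsto_const_nhds.mul hr).mul
      ((((Complex.GammaSeq_tendsto_Gamma _).mul (Complex.GammaSeq_tendsto_Gamma _)).mul
        (Complex.GammaSeq_tendsto_Gamma _)).mul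
        (((tendsto_inv_GammaSeq _).mul (tendsto_inv_GammaSeq _)).mul (tendsto_inv_GammaSeq _)))
  have hconst : ∀ᶠ n : ℕ in atTop, 2 * Real.pi *
      ((cauchyInt (2 * (n + 1 : ℕ)) 0)⁻¹ * cauchyInt (a + 2 * (n + 1 : ℕ)) x) *
      (G (a / 2 + 1 / 2) n * G (a / 2 + 1) n * G 1 n *
        ((G (a / 2 + 1 + x) n)⁻¹ * (G (a / 2 + 1 - x) n)⁻¹ * (G (1 / 2) n)⁻¹)) =
      cauchyInt a x := by
    filter_upwards [eventually_ne_atTop 0] with n hn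
    have h1 := cauchyInt_prod ha x (n + 1)
    have h0 := cauchyInt_prod (a := 0) (by simp) 0 (n + 1)
    simp only [zero_div, zero_add, sub_zero, add_zero, cauchyInt_zero_zero] at h0
    have hpn : ∀ z : ℂ, 0 < z.re → ∏ j ∈ Finset.range (n + 1), (z + j) ≠ 0 := by
      intro z hz
      refine Finset.prod_ne_zero_iff.2 fun j _ h => ?_
      have := congrArg Complex.re h
      simp at this
      have hj : (0 : ℝ) ≤ j := by positivity
      linarith
    have q1 := hpn (a / 2 + 1 / 2) (by simp; linarith)
    have q2 := hpn (a / 2 + 1) (by simp; linarith)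
    have q3 := hpn 1 (by simp)
    have q4 := hpn (1 / 2) (by simp)
    have h4 : (4 : ℂ) ^ (n + 1) ≠ 0 := pow_ne_zero _ (by norm_num)
    have hc0 : cauchyInt (2 * (n + 1 : ℕ)) 0 ≠ 0 := by
      intro h
      rw [h, mul_zero] at h0
      have : (Real.pi : ℂ) ≠ 0 := by exact_mod_cast Real.pi_ne_zero
      simp only [mul_eq_zero, this, q3, q4, h4, two_ne_zero, or_self] at h0
    rw [prod_eq_inv_GammaSeq _ hn] at q1 q2 q3 q4
    simp only [prod_eq_inv_GammaSeq _ hn] at h0 h1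
    rw [← hG] at q1 q2 q3 h0 h1
    have g1 := right_ne_zero_of_mul q1
    have g2 := right_ne_zero_of_mul q2
    have g3 := right_ne_zero_of_mul q3
    have hn' : (n : ℂ) ≠ 0 := by exact_mod_cast hn
    -- the parameters of the products in numerator and denominator have equal sums,
    -- so the powers of `n` in Euler's formula cancel
    have e1 : (n : ℂ) ^ (a / 2 + 1 / 2) * (n : ℂ) ^ (a / 2 + 1) * n ^ (1 : ℂ) =
        (n : ℂ) ^ (a / 2 + 1 - x) * (n : ℂ) ^ (a / 2 + 1 + x) * n ^ (1 / 2 : ℂ) := by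
      simp only [← Complex.cpow_add _ _ hn']
      congr 1; ring
    have c1 : G (a / 2 + 1 / 2) n * (G (a / 2 + 1 / 2) n)⁻¹ = 1 := mul_inv_cancel₀ (fun h => g1 (by rw [h, inv_zero]))
    have c2 : G (a / 2 + 1) n * (G (a / 2 + 1) n)⁻¹ = 1 := mul_inv_cancel₀ (fun h => g2 (by rw [h, inv_zero]))
    have c3 : G 1 n * (G 1 n)⁻¹ = 1 := mul_inv_cancel₀ (fun h => g3 (by rw [h, inv_zero]))
    exact cancel_identity h4 q1 q2 q3 hc0 c1 c2 c3 h0 h1 e1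
  have hfin := tendsto_nhds_unique (tendsto_const_nhds.congr' (hconst.mono fun n hn => hn.symm)) hlim
  have hd := Complex.Gamma_mul_Gamma_add_half (a / 2 + 1 / 2)
  rw [show a / 2 + 1 / 2 + 1 / 2 = a / 2 + 1 by ring, show 2 * (a / 2 + 1 / 2) = 1 + a by ring,
    show 1 - (1 + a) = -a by ring] at hd
  have hs : Complex.Gamma (1 / 2) = (√Real.pi : ℂ) := by
    rw [Complex.Gamma_one_half_eq, Real.sqrt_eq_rpow, Complex.ofReal_cpow Real.pi_pos.le]
    norm_num
  have hs0 : (√Real.pi : ℂ) ≠ 0 := by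
    exact_mod_cast (Real.sqrt_pos.2 Real.pi_pos).ne'
  have h2 : (2 : ℂ) ^ a * 2 ^ (-a) = 1 := by
    rw [← Complex.cpow_add _ _ two_ne_zero]; simp
  rw [hfin, hd, hs, Complex.Gamma_one, show 1 + a / 2 + x = a / 2 + 1 + x by ring,
    show 1 + a / 2 - x = a / 2 + 1 - x by ring]
  have h3 : (√Real.pi : ℂ) * (√Real.pi : ℂ)⁻¹ = 1 := mul_inv_cancel₀ hs0
  set Y := (Complex.Gamma (a / 2 + 1 + x))⁻¹ * (Complex.Gamma (a / 2 + 1 - x))⁻¹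
  linear_combination 2 * Real.pi * Complex.Gamma (1 + a) * Y * ((√Real.pi : ℂ) * (√Real.pi : ℂ)⁻¹) *
    h2 + 2 * Real.pi * Complex.Gamma (1 + a) * Y * h3

/-! ### The Fisher–Hartwig symbol -/

theorem fhPureSymbol_eq (α β : ℂ) {θ : ℝ} (h : θ ∈ Set.Ioo 0 (2 * Real.pi)) :
    fhPureSymbol α β θ = fhWeight θ ^ (2 * α) * fhPhase β θ := by
  rw [fhPureSymbol, fhPhase, Complex.cpow_def_of_ne_zero (fhWeight_ne_zero h), fhWeight,
    ← Complex.ofReal_log (sin_half_pos h).le, Real.log_abs, mul_comm (2 * α)]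

theorem fourierCoeff2_fhPureSymbol {α : ℂ} (hα : -(1 / 2 : ℝ) < α.re) (β : ℂ) (l : ℤ) :
    fourierCoeff2 (fhPureSymbol α β) l = Complex.exp (-Complex.I * Real.pi * l) *
      (Complex.Gamma (1 + 2 * α) *
        ((Complex.Gamma (1 + α + β - l))⁻¹ * (Complex.Gamma (1 + α - β + l))⁻¹)) := by
  have hα' : -1 < (2 * α).re := by simp; linarith
  have hint : ∫ θ in (0 : ℝ)..(2 * Real.pi),
      Complex.exp (-Complex.I * (l : ℂ) * (θ : ℂ)) * fhPureSymbol α β θ =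
      Complex.exp (-Complex.I * Real.pi * l) * cauchyInt (2 * α) (β - l) := by
    rw [cauchyInt, ← intervalIntegral.integral_const_mul]
    refine integral_congr_Ioo fun θ hθ => ?_
    have he : Complex.exp (-Complex.I * (l : ℂ) * (θ : ℂ)) * fhPhase β θ =
        Complex.exp (-Complex.I * Real.pi * l) * fhPhase (β - l) θ := by
      simp only [fhPhase, ← Complex.exp_add]
      congr 1; push_cast; ring
    rw [fhPureSymbol_eq α β hθ]
    linear_combination fhWeight θ ^ (2 * α) * he
  have hpi : (2 * Real.pi : ℂ) ≠ 0 := by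
    exact_mod_cast Real.two_pi_pos.ne'
  rw [fourierCoeff2, hint, cauchyInt_eq hα', mul_div_cancel_left₀ α two_ne_zero,
    show 1 + α + (β - l) = 1 + α + β - l by ring, show 1 + α - (β - l) = 1 + α - β + l by ring]
  push_cast
  field_simp

/-- **Böttcher–Silbermann exact formula** for the Toeplitz determinant with a single pure
Fisher–Hartwig singularity: for `Re α > −1/2` and `α ± β ∉ {−1, −2, …}`, the symbol is
integrable and `D_n(f) = ∏_{q=1}^{n} Γ(q)Γ(q+2α)/(Γ(q+α+β)Γ(q+α−β))` for all `n ≥ 1`. -/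
theorem bottcher_silbermann_exact
    (α β : ℂ) (hα : -(1 / 2 : ℝ) < α.re)
    (hαβ : ∀ k : ℕ, α + β ≠ -((k : ℂ) + 1) ∧ α - β ≠ -((k : ℂ) + 1))
    (n : ℕ) (hn : 1 ≤ n) :
    IntervalIntegrable (fhPureSymbol α β) volume 0 (2 * Real.pi) ∧
    (Matrix.of fun j k : Fin n =>
        fourierCoeff2 (fhPureSymbol α β) ((j : ℤ) - (k : ℤ))).det
      = ∏ q ∈ Finset.Icc 1 n,
          (Complex.Gamma (q : ℂ) * Complex.Gamma ((q : ℂ) + 2 * α)) /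
            (Complex.Gamma ((q : ℂ) + α + β) * Complex.Gamma ((q : ℂ) + α - β)) := by
  have hα' : -1 < (2 * α).re := by simp; linarith
  constructor
  · have h := intervalIntegrable_integrand hα' β
    rw [intervalIntegrable_iff_integrableOn_Ioo_of_le Real.two_pi_pos.le] at h ⊢
    exact h.congr_fun (fun θ hθ => (fhPureSymbol_eq α β hθ).symm) measurableSet_Ioo
  obtain ⟨m, rfl⟩ : ∃ m, n = m + 1 := ⟨n - 1, by omega⟩
  -- `u + v = 2α` has real part above `-1`
  have huv : ∀ i : ℕ, 1 + (α + β) + (α - β) + i ≠ 0 := by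
    intro i h
    have := congrArg Complex.re h
    simp at this
    have hi : (0 : ℝ) ≤ i := by positivity
    linarith
  have hdet := det_gamma (α + β) (α - β) huv m
  -- the sign `(-1)^(j-k) = exp (-iπj) · exp (iπk)` scales rows and columns by inverse factors
  have hM : (Matrix.of fun j k : Fin (m + 1) =>
        fourierCoeff2 (fhPureSymbol α β) ((j : ℤ) - (k : ℤ))) =
      Matrix.of fun j k : Fin (m + 1) => Complex.exp (-Complex.I * Real.pi * (j : ℕ)) *
        (Matrix.of fun j k : Fin (m + 1) => Complex.exp (Complex.I * Real.pi * (k : ℕ)) *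
          (Matrix.of fun j k : Fin (m + 1) =>
            Complex.Gamma (1 + (α + β) + (α - β)) *
              ((Complex.Gamma (1 + (α + β) + k - j))⁻¹ *
                (Complex.Gamma (1 + (α - β) + j - k))⁻¹)) j k) j k := by
    ext j k
    simp only [Matrix.of_apply]
    rw [fourierCoeff2_fhPureSymbol hα, ← mul_assoc (Complex.exp _) (Complex.exp _),
      ← Complex.exp_add]
    push_cast
    rw [show -Complex.I * (Real.pi : ℂ) * ((j : ℕ) - (k : ℕ)) =
        -Complex.I * Real.pi * (j : ℕ) + Complex.I * Real.pi * (k : ℕ) by ring,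
      show 1 + (α + β) + (α - β) = 1 + 2 * α by ring,
      show 1 + α + β - (((j : ℕ) : ℂ) - (k : ℕ)) = 1 + (α + β) + (k : ℕ) - (j : ℕ) by ring,
      show 1 + α - β + (((j : ℕ) : ℂ) - (k : ℕ)) = 1 + (α - β) + (j : ℕ) - (k : ℕ) by ring]
  rw [hM, Matrix.det_mul_column, Matrix.det_mul_row, hdet, ← mul_assoc, ← Finset.prod_mul_distrib]
  have h1 : ∏ i : Fin (m + 1), Complex.exp (-Complex.I * Real.pi * (i : ℕ)) *
      Complex.exp (Complex.I * Real.pi * (i : ℕ)) = 1 := by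
    refine Finset.prod_eq_one fun i _ => ?_
    rw [← Complex.exp_add, ← Complex.exp_zero]
    congr 1; ring
  rw [h1, one_mul]
  refine Finset.prod_congr rfl fun q _ => ?_
  rw [show (q : ℂ) + (α + β) + (α - β) = q + 2 * α by ring,
    show (q : ℂ) + (α + β) = q + α + β by ring, show (q : ℂ) + (α - β) = q + α - β by ring]
end
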